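/- Let q ≥ 2 be an integer and let f : ℕ → ℝ be a nonnegative function such that for all positive integers k₁ ≥ k₂ ≥ ⋯ ≥ k_q with k_q ≥ k₁/2 one has r(k₁, k₂, …, k_q) ≤ f(k₁) · q^{k₁ + k₂ + ⋯ + k_q}. Then there exists a constant c > 0 such that for all positive integers t, the q-colour on-line Ramsey number of K_t satisfies r̃_q(t) ≤ f(⌈ct⌉) · q^{qt}. -/

import Mathlib

/-- A monochromatic clique of size `k` in colour `i` for an edge-colouring `c` of `K_n`. -/
def monoClique {n q : ℕ} (c : Sym2 (Fin n) → Fin q) (i : Fin q) (k : ℕ) : Prop :=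
  ∃ A : Finset (Fin n), A.card = k ∧ ∀ u ∈ A, ∀ v ∈ A, u ≠ v → c s(u, v) = i

/-- The `q`-colour Ramsey number `r(k 0, …, k (q-1))`. -/
noncomputable def ramseyQ {q : ℕ} (k : Fin q → ℕ) : ℕ :=
  sInf {n : ℕ | ∀ c : Sym2 (Fin n) → Fin q, ∃ i : Fin q, monoClique c i (k i)}

/-- The two-colour Ramsey number `r(s, t)`. -/
noncomputable def ramsey2 (s t : ℕ) : ℕ := ramseyQ ![s, t]

/-- A history in the on-line Ramsey game: the previously presented edges with their colours. -/
abbrev History (q : ℕ) := List (Sym2 ℕ × Fin q)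

/-- A Builder strategy is valid if it always presents a genuine new edge. -/
def validBuilder {q : ℕ} (B : History q → Sym2 ℕ) : Prop :=
  ∀ h : History q, ¬ (B h).IsDiag ∧ B h ∉ h.map Prod.fst

/-- The play determined by a Builder strategy `B` and a Painter strategy `P`:
`play B P n` is the history after `n` rounds. -/
def play {q : ℕ} (B : History q → Sym2 ℕ) (P : History q → Sym2 ℕ → Fin q) : ℕ → History q
  | 0 => []
  | n + 1 =>
      let h := play B P n
      h ++ [(B h, P h (B h))]

/-- The graph formed by the edges of colour `i` in a history. -/
def colourGraph {q : ℕ} (h : History q) (i : Fin q) : SimpleGraph ℕ :=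
  SimpleGraph.fromEdgeSet {e | (e, i) ∈ h}

/-- `H` contains a copy of `G` as a subgraph. -/
def containsCopy {V : Type*} (G : SimpleGraph V) (H : SimpleGraph ℕ) : Prop :=
  ∃ f : V → ℕ, Function.Injective f ∧ ∀ u v, G.Adj u v → H.Adj (f u) (f v)

/-- The `q`-colour on-line Ramsey number of `G`: the least `N` such that Builder has a
valid strategy forcing, against every Painter strategy, a monochromatic copy of `G`
within at most `N` rounds. -/
noncomputable def onlineRamsey {V : Type*} (q : ℕ) (G : SimpleGraph V) : ℕ :=
  sInf {N : ℕ | ∃ B : History q → Sym2 ℕ, validBuilder B ∧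
    ∀ P : History q → Sym2 ℕ → Fin q,
      ∃ n ≤ N, ∃ i : Fin q, containsCopy G (colourGraph (play B P n) i)}

section OnlineRamseyHelpers

open Finset


/-- Finite Gram kernels. -/
def GramK {α : Type*} (K : α → α → ℝ) : Prop :=
  ∃ (κ : Type) (_ : Fintype κ) (φ : κ → α → ℝ), ∀ x y, K x y = ∑ k, φ k x * φ k y

lemma GramK.add {α : Type*} {K L : α → α → ℝ} (hK : GramK K) (hL : GramK L) :
    GramK (fun x y => K x y + L x y) := by
  obtain ⟨κ, _, φ, h⟩ := hK
  obtain ⟨κ', _, φ', h'⟩ := hL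
  refine ⟨κ ⊕ κ', inferInstance, Sum.elim φ φ', fun x y => ?_⟩
  simp [h, h']

lemma GramK.mul {α : Type*} {K L : α → α → ℝ} (hK : GramK K) (hL : GramK L) :
    GramK (fun x y => K x y * L x y) := by
  obtain ⟨κ, _, φ, h⟩ := hK
  obtain ⟨κ', _, φ', h'⟩ := hL
  refine ⟨κ × κ', inferInstance, fun p x => φ p.1 x * φ' p.2 x, fun x y => ?_⟩
  simp only [h, h', Fintype.sum_prod_type, Finset.sum_mul_sum]
  refine Finset.sum_congr rfl fun i _ => Finset.sum_congr rfl fun j _ => by ring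

lemma GramK.const {α : Type*} {a : ℝ} (ha : 0 ≤ a) : GramK (fun _ _ : α => a) := by
  refine ⟨Unit, inferInstance, fun _ _ => √a, fun x y => ?_⟩
  simp [Real.mul_self_sqrt ha]

lemma GramK.pow {α : Type*} {K : α → α → ℝ} (hK : GramK K) (n : ℕ) :
    GramK (fun x y => K x y ^ n) := by
  induction n with
  | zero => simpa using GramK.const (α := α) zero_le_one
  | succ n ih => simpa [pow_succ] using ih.mul hK

lemma GramK.sum {α ι : Type*} {K : ι → α → α → ℝ} (s : Finset ι) (hK : ∀ i ∈ s, GramK (K i)) :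
    GramK (fun x y => ∑ i ∈ s, K i x y) := by
  classical
  induction s using Finset.induction_on with
  | empty => simpa using GramK.const (α := α) le_rfl
  | insert a s ha ih =>
    simp only [Finset.sum_insert ha]
    exact (hK a (by simp)).add (ih fun i hi => hK i (by simp [hi]))

lemma GramK.prod {α ι : Type*} {K : ι → α → α → ℝ} (s : Finset ι) (hK : ∀ i ∈ s, GramK (K i)) :
    GramK (fun x y => ∏ i ∈ s, K i x y) := by
  classical
  induction s using Finset.induction_on with
  | empty => simpa using GramK.const (α := α) zero_le_one
  | insert a s ha ih =>
    simp only [Finset.prod_insert ha]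
    exact (hK a (by simp)).mul (ih fun i hi => hK i (by simp [hi]))

lemma GramK.sum_nonneg {α : Type*} {K : α → α → ℝ} (hK : GramK K) (X : Finset α) :
    0 ≤ ∑ p ∈ X ×ˢ X, K p.1 p.2 := by
  obtain ⟨κ, _, φ, h⟩ := hK
  simp only [h]
  rw [Finset.sum_comm]
  refine Finset.sum_nonneg fun k _ => ?_
  rw [Finset.sum_product, ← Finset.sum_mul_sum]
  exact mul_self_nonneg _

/-- Truncation of `2 + cosh √x`. -/
noncomputable def gT (n : ℕ) (x : ℝ) : ℝ := 2 + ∑ m ∈ range n, x ^ m / ((2 * m).factorial : ℝ)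

/-- `2 + cosh √x`. -/
noncomputable def gF (x : ℝ) : ℝ := if 0 ≤ x then 2 + Real.cosh √x else 2 + Real.cos √(-x)

lemma gT_tendsto (x : ℝ) : Filter.Tendsto (fun n => gT n x) Filter.atTop (nhds (gF x)) := by
  unfold gT gF
  split_ifs with h
  · refine Filter.Tendsto.const_add _ ?_
    have := (Real.hasSum_cosh (√x)).tendsto_sum_nat
    refine this.congr fun n => Finset.sum_congr rfl fun m _ => ?_
    rw [pow_mul, Real.sq_sqrt h]
  · refine Filter.Tendsto.const_add _ ?_
    have := (Real.hasSum_cos (√(-x))).tendsto_sum_nat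
    refine this.congr fun n => Finset.sum_congr rfl fun m _ => ?_
    rw [pow_mul, Real.sq_sqrt (by linarith), ← mul_pow]
    congr 2
    ring

lemma gF_one_le (x : ℝ) : 1 ≤ gF x := by
  unfold gF
  split_ifs with h
  · linarith [Real.one_le_cosh √x]
  · linarith [Real.neg_one_le_cos √(-x)]

lemma gF_le_three {x : ℝ} (hx : x < 0) : gF x ≤ 3 := by
  unfold gF
  rw [if_neg (by linarith)]
  linarith [Real.cos_le_one √(-x)]

lemma gF_le_exp (x : ℝ) : gF x ≤ 3 * Real.exp √x := by
  rcases lt_or_ge x 0 with h | h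
  · have := gF_le_three h
    have := Real.one_le_exp (Real.sqrt_nonneg x)
    linarith
  · unfold gF
    rw [if_pos h, Real.cosh_eq]
    have h1 := Real.one_le_exp (Real.sqrt_nonneg x)
    have h2 : Real.exp (-√x) ≤ 1 := Real.exp_le_one_iff.2 (by linarith [Real.sqrt_nonneg x])
    linarith

lemma le_gF (x : ℝ) : x ≤ gF x := by
  rcases lt_or_ge x 0 with h | h
  · linarith [gF_one_le x]
  · have : gT 3 x ≤ gF x := by
      unfold gT gF
      rw [if_pos h]
      have h1 := sum_le_hasSum (range 3) (fun i _ => by positivity) (Real.hasSum_cosh (√x))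
      have h2 : ∑ m ∈ range 3, x ^ m / ((2 * m).factorial : ℝ)
          = ∑ m ∈ range 3, √x ^ (2 * m) / ((2 * m).factorial : ℝ) := by
        refine Finset.sum_congr rfl fun m _ => ?_
        rw [pow_mul, Real.sq_sqrt h]
      linarith
    refine le_trans ?_ this
    simp [gT, Finset.sum_range_succ, Nat.factorial]
    nlinarith [sq_nonneg (x - 6)]

/-- The test function. -/
noncomputable def fF {r : ℕ} (x : Fin r → ℝ) : ℝ := ∑ j, x j * ∏ i ∈ univ.erase j, gF (x i)

lemma fF_sum_nonneg {α : Type*} {r : ℕ} (Z : Fin r → α → α → ℝ) (hZ : ∀ i, GramK (Z i))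
    (X : Finset α) : 0 ≤ ∑ p ∈ X ×ˢ X, fF (fun i => Z i p.1 p.2) := by
  have hT : Filter.Tendsto (fun n => ∑ p ∈ X ×ˢ X, ∑ j, Z j p.1 p.2 *
      ∏ i ∈ univ.erase j, gT n (Z i p.1 p.2)) Filter.atTop
      (nhds (∑ p ∈ X ×ˢ X, fF (fun i => Z i p.1 p.2))) := by
    unfold fF
    refine tendsto_finsetSum _ fun p _ => tendsto_finsetSum _ fun j _ => ?_
    exact (tendsto_finsetProd _ fun i _ => gT_tendsto _).const_mul _
  refine ge_of_tendsto' hT fun n => ?_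
  have : GramK (fun x y => ∑ j, Z j x y * ∏ i ∈ univ.erase j, gT n (Z i x y)) := by
    refine GramK.sum _ fun j _ => (hZ j).mul (GramK.prod _ fun i _ => ?_)
    unfold gT
    refine (GramK.const (by norm_num)).add (GramK.sum _ fun m _ => ?_)
    simp only [div_eq_mul_inv]
    exact ((hZ i).pow m).mul (GramK.const (by positivity))
  exact this.sum_nonneg X

lemma fF_eq {r : ℕ} (x : Fin r → ℝ) : fF x = (∏ i, gF (x i)) * ∑ j, x j / gF (x j) := by
  unfold fF
  rw [Finset.mul_sum]
  refine Finset.sum_congr rfl fun j _ => ?_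
  rw [← Finset.mul_prod_erase univ (fun i => gF (x i)) (mem_univ j)]
  have := gF_one_le (x j)
  field_simp

lemma fF_neg {r : ℕ} (x : Fin r → ℝ) (i : Fin r) (hi : x i < -(3 * r)) : fF x ≤ -1 := by
  rw [fF_eq]
  have hr : (1 : ℝ) ≤ r := by exact_mod_cast i.pos
  have h1 : (1 : ℝ) ≤ ∏ i, gF (x i) := by
    have := Finset.prod_le_prod (s := univ) (f := fun _ : Fin r => (1 : ℝ)) (g := fun i => gF (x i))
      (fun _ _ => zero_le_one) (fun i _ => gF_one_le _)
    simpa using this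
  have h2 : ∑ j, x j / gF (x j) ≤ -1 := by
    rw [← Finset.add_sum_erase univ _ (mem_univ i)]
    have a1 : x i / gF (x i) ≤ -r := by
      have hg := gF_one_le (x i)
      have hg3 := gF_le_three (x := x i) (by linarith)
      rw [div_le_iff₀ (by linarith)]
      nlinarith
    have a2 : ∑ j ∈ univ.erase i, x j / gF (x j) ≤ ∑ j ∈ univ.erase i, (1 : ℝ) := by
      refine Finset.sum_le_sum fun j _ => ?_
      have hg := gF_one_le (x j)
      rw [div_le_one (by linarith)]
      exact le_gF _
    rw [Finset.sum_const, Finset.card_erase_of_mem (mem_univ i), Finset.card_univ,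
      Fintype.card_fin, nsmul_eq_mul, mul_one] at a2
    rw [Nat.cast_sub i.pos] at a2
    push_cast at a2
    linarith
  nlinarith

lemma fF_le {r : ℕ} (x : Fin r → ℝ) :
    fF x ≤ ∑ l, 2 * r * 3 ^ r * Real.exp (r * √(x l)) := by
  rcases Nat.eq_zero_or_pos r with h0 | h0
  · subst h0; simp [fF]
  obtain ⟨l, -, hl⟩ := Finset.exists_max_image univ x ⟨⟨0, h0⟩, mem_univ _⟩
  refine le_trans ?_ (Finset.single_le_sum
    (f := fun l => 2 * r * 3 ^ r * Real.exp (r * √(x l))) (fun i _ => by positivity) (mem_univ l))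
  have key : ∀ j ∈ (univ : Finset (Fin r)), x j * ∏ i ∈ univ.erase j, gF (x i)
      ≤ 2 * 3 ^ r * Real.exp (r * √(x l)) := by
    intro j _
    have hp0 : 0 ≤ ∏ i ∈ univ.erase j, gF (x i) :=
      Finset.prod_nonneg fun i _ => by linarith [gF_one_le (x i)]
    have hp : ∏ i ∈ univ.erase j, gF (x i) ≤ (3 * Real.exp √(x l)) ^ (r - 1) := by
      have := Finset.prod_le_prod (s := univ.erase j) (f := fun i => gF (x i))
        (g := fun _ => 3 * Real.exp √(x l)) (fun i _ => by linarith [gF_one_le (x i)])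
        (fun i _ => (gF_le_exp _).trans (by
          have := Real.sqrt_le_sqrt (hl i (mem_univ i))
          gcongr))
      simpa using this
    have hx : x j ≤ 2 * Real.exp √(x l) := by
      rcases lt_or_ge (x j) 0 with h | h
      · have := Real.exp_pos √(x l); linarith
      · have h1 := hl j (mem_univ j)
        have h2 := Real.quadratic_le_exp_of_nonneg (Real.sqrt_nonneg (x l))
        rw [Real.sq_sqrt (h.trans h1)] at h2
        have := Real.sqrt_nonneg (x l)
        linarith
    calc x j * ∏ i ∈ univ.erase j, gF (x i) ≤ 2 * Real.exp √(x l) * (3 * Real.exp √(x l)) ^ (r - 1) := by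
          gcongr
      _ = 2 * 3 ^ (r - 1) * (Real.exp √(x l)) ^ r := by
          obtain ⟨m, rfl⟩ : ∃ m, r = m + 1 := ⟨r - 1, by omega⟩
          simp only [Nat.add_sub_cancel, mul_pow, pow_succ]
          ring
      _ ≤ 2 * 3 ^ r * (Real.exp √(x l)) ^ r := by
          gcongr
          · norm_num
          · omega
      _ = _ := by rw [← Real.exp_nat_mul]
  calc fF x ≤ ∑ j : Fin r, 2 * 3 ^ r * Real.exp (r * √(x l)) := Finset.sum_le_sum key
    _ = _ := by simp; ring

/-- Geometric lemma of Balister et al. -/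
lemma geo_lemma (r : ℕ) (hr : 1 ≤ r) : ∃ β C : ℝ, 0 < β ∧ β ≤ 1 ∧ 0 < C ∧
    ∀ {α : Type} (X : Finset α) (_ : X.Nonempty) (Z : Fin r → α → α → ℝ) (_ : ∀ i, GramK (Z i)),
    ∃ l : Fin r, ∃ lam : ℝ, -1 ≤ lam ∧ β * Real.exp (-(C * √(lam + 1))) * (X.card : ℝ) ^ 2 ≤
      (((X ×ˢ X).filter fun p => lam ≤ Z l p.1 p.2 ∧ ∀ i, -1 ≤ Z i p.1 p.2).card : ℝ) := by
  set A : ℝ := 2 * r * 3 ^ r with hA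
  have hr' : (1 : ℝ) ≤ r := by exact_mod_cast hr
  have hA1 : 1 ≤ A := by
    have : (1 : ℝ) ≤ 3 ^ r := one_le_pow₀ (by norm_num)
    nlinarith
  set β : ℝ := 1 / (8 * A * Real.exp r * r) with hβ
  have hden : 8 ≤ 8 * A * Real.exp r * r := by
    have : 1 ≤ Real.exp r := Real.one_le_exp (by linarith)
    have h1 : 1 ≤ A * Real.exp r := by nlinarith
    nlinarith
  have hβ0 : 0 < β := by positivity
  have hβ8 : β ≤ 1 / 8 := by
    rw [hβ]; exact one_div_le_one_div_of_le (by norm_num) hden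
  refine ⟨β, (r + 1) * √(3 * r), hβ0, by linarith, by positivity, ?_⟩
  intro α X hX Z hZ
  by_contra hcon
  push Not at hcon
  set E := (X ×ˢ X).filter fun p => ∀ i, -1 ≤ Z i p.1 p.2 with hE
  set x2 : ℝ := (X.card : ℝ) ^ 2 with hx2
  have hx2pos : 0 < x2 := by have := hX.card_pos; positivity
  -- tail bounds
  have tail : ∀ (l : Fin r) (n : ℕ),
      ((E.filter fun p => (n : ℝ) ≤ √(3 * r * (Z l p.1 p.2 + 1))).card : ℝ)
        ≤ β * Real.exp (-((r + 1) * n)) * x2 := by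
    intro l n
    have h := hcon l (n ^ 2 / (3 * r) - 1) (by
      have : (0 : ℝ) ≤ n ^ 2 / (3 * r) := by positivity
      linarith)
    have e1 : ((r : ℝ) + 1) * √(3 * r) * √(n ^ 2 / (3 * r) - 1 + 1) = (r + 1) * n := by
      rw [mul_assoc, ← Real.sqrt_mul (by positivity)]
      have : 3 * (r : ℝ) * (n ^ 2 / (3 * r) - 1 + 1) = (n : ℝ) ^ 2 := by field_simp; ring
      rw [this, Real.sqrt_sq (by positivity)]
    rw [e1] at h
    refine le_trans ?_ h.le
    refine Nat.cast_le.2 (Finset.card_le_card ?_)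
    intro p hp
    simp only [hE, Finset.mem_filter] at hp ⊢
    refine ⟨hp.1.1, ?_, hp.1.2⟩
    have h3 := hp.2
    have h0 : (0 : ℝ) ≤ 3 * r * (Z l p.1 p.2 + 1) := by
      have := hp.1.2 l
      have : 0 ≤ Z l p.1 p.2 + 1 := by linarith
      positivity
    rw [Real.le_sqrt (by positivity) h0] at h3
    rw [sub_le_iff_le_add, div_le_iff₀ (by positivity)]
    linarith
  have hsum := fF_sum_nonneg (fun i x y => 3 * r * Z i x y)
    (fun i => (GramK.const (by positivity)).mul (hZ i)) X
  rw [← Finset.sum_filter_add_sum_filter_not (X ×ˢ X) (fun p => ∀ i, -1 ≤ Z i p.1 p.2)] at hsum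
  -- off E
  have hoff : ∑ p ∈ (X ×ˢ X).filter (fun p => ¬ ∀ i, -1 ≤ Z i p.1 p.2),
      fF (fun i => 3 * r * Z i p.1 p.2) ≤ - (x2 - E.card) := by
    have h1 : ∑ p ∈ (X ×ˢ X).filter (fun p => ¬ ∀ i, -1 ≤ Z i p.1 p.2),
      fF (fun i => 3 * r * Z i p.1 p.2) ≤
        ∑ p ∈ (X ×ˢ X).filter (fun p => ¬ ∀ i, -1 ≤ Z i p.1 p.2), (-1 : ℝ) := by
      refine Finset.sum_le_sum fun p hp => ?_
      simp only [Finset.mem_filter, not_forall, not_le] at hp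
      obtain ⟨i, hi⟩ := hp.2
      refine fF_neg _ i ?_
      have : (0 : ℝ) < 3 * r := by positivity
      nlinarith
    refine h1.trans ?_
    have h2 := Finset.card_filter_add_card_filter_not (s := X ×ˢ X)
      (fun p => ∀ i, -1 ≤ Z i p.1 p.2)
    rw [Finset.card_product] at h2
    have h3 : (E.card : ℝ) + (((X ×ˢ X).filter (fun p => ¬ ∀ i, -1 ≤ Z i p.1 p.2)).card : ℝ) = x2 := by
      rw [hx2, sq, ← Nat.cast_mul, ← h2, Nat.cast_add]
    simp only [Finset.sum_const, nsmul_eq_mul]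
    linarith
  have hEcard : (E.card : ℝ) ≤ β * x2 := by
    have := tail ⟨0, hr⟩ 0
    rw [Finset.filter_true_of_mem (fun p _ => by
      rw [Nat.cast_zero]; exact Real.sqrt_nonneg _)] at this
    simpa using this
  have hon : ∀ l : Fin r, ∑ p ∈ E, A * Real.exp (r * √(3 * r * Z l p.1 p.2))
      ≤ A * Real.exp r * (2 * β) * x2 := by
    intro l
    set s : α × α → ℕ := fun p => ⌊√(3 * r * (Z l p.1 p.2 + 1))⌋₊ with hs
    obtain ⟨M, hM⟩ : ∃ M, ∀ p ∈ E, s p ∈ range M := by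
      refine ⟨E.sup s + 1, fun p hp => ?_⟩
      simp only [Finset.mem_range]
      exact Nat.lt_succ_of_le (Finset.le_sup (f := s) hp)
    rw [← Finset.sum_fiberwise_of_maps_to hM]
    have step : ∀ n ∈ range M, ∑ p ∈ E.filter (fun p => s p = n),
        A * Real.exp (r * √(3 * r * Z l p.1 p.2)) ≤ A * Real.exp r * β * x2 * (1/2) ^ n := by
      intro n _
      have b1 : ∑ p ∈ E.filter (fun p => s p = n),
        A * Real.exp (r * √(3 * r * Z l p.1 p.2)) ≤
          ∑ p ∈ E.filter (fun p => s p = n), A * Real.exp (r * (n + 1)) := by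
        refine Finset.sum_le_sum fun p hp => ?_
        have hp2 := (Finset.mem_filter.1 hp).2
        have h5 : √(3 * r * Z l p.1 p.2) ≤ n + 1 := by
          have := (Nat.lt_floor_add_one √(3 * r * (Z l p.1 p.2 + 1))).le
          rw [← hp2]
          refine le_trans (Real.sqrt_le_sqrt ?_) this
          nlinarith
        gcongr
      refine b1.trans ?_
      rw [Finset.sum_const, nsmul_eq_mul]
      have b2 : ((E.filter (fun p => s p = n)).card : ℝ) ≤ β * Real.exp (-((r + 1) * n)) * x2 := by
        refine le_trans ?_ (tail l n)
        refine Nat.cast_le.2 (Finset.card_le_card fun p hp => ?_)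
        simp only [Finset.mem_filter] at hp ⊢
        refine ⟨hp.1, ?_⟩
        rw [← hp.2]
        exact Nat.floor_le (Real.sqrt_nonneg _)
      calc _ ≤ β * Real.exp (-((r + 1) * n)) * x2 * (A * Real.exp (r * (n + 1))) := by gcongr
        _ = A * Real.exp r * β * x2 * Real.exp (-n) := by
            have : Real.exp (-((r + 1) * n)) * Real.exp (r * (n + 1))
              = Real.exp r * Real.exp (-n) := by
              rw [← Real.exp_add, ← Real.exp_add]; congr 1; ring
            linear_combination (β * x2 * A) * this
        _ ≤ A * Real.exp r * β * x2 * (1/2) ^ n := by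
            have h6 : Real.exp (-n : ℝ) ≤ (1/2) ^ n := by
              have : Real.exp (-n : ℝ) = (Real.exp (-1)) ^ n := by
                rw [← Real.exp_nat_mul]; congr 1; ring
              rw [this]
              gcongr
              rw [Real.exp_neg, inv_eq_one_div]
              refine one_div_le_one_div_of_le (by norm_num) ?_
              have := Real.add_one_le_exp (1 : ℝ); linarith
            gcongr
    refine (Finset.sum_le_sum step).trans ?_
    rw [← Finset.mul_sum]
    have hg : ∑ i ∈ range M, (1/2 : ℝ) ^ i ≤ 2 := by
      have := sum_geometric_two_le M
      simpa using this
    calc _ ≤ A * Real.exp r * β * x2 * 2 := by gcongr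
      _ = _ := by ring
  have hon2 : ∑ p ∈ E, fF (fun i => 3 * r * Z i p.1 p.2) ≤ x2 / 4 := by
    calc _ ≤ ∑ p ∈ E, ∑ l, A * Real.exp (r * √(3 * r * Z l p.1 p.2)) :=
          Finset.sum_le_sum fun p _ => fF_le _
      _ = ∑ l, ∑ p ∈ E, A * Real.exp (r * √(3 * r * Z l p.1 p.2)) := Finset.sum_comm
      _ ≤ ∑ l : Fin r, A * Real.exp r * (2 * β) * x2 := Finset.sum_le_sum fun l _ => hon l
      _ = x2 / 4 := by
        simp only [Finset.sum_const, Finset.card_univ, Fintype.card_fin, nsmul_eq_mul]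
        rw [hβ]
        have : Real.exp (r : ℝ) ≠ 0 := (Real.exp_pos _).ne'
        field_simp
        norm_num
  have : β * x2 ≤ 1/8 * x2 := by gcongr
  linarith


/-- Neighbours of `x` in colour `i` inside `S`. -/
def Nb {V : Type} [DecidableEq V] {q : ℕ} (c : Sym2 V → Fin q) (i : Fin q) (x : V)
    (S : Finset V) : Finset V := S.filter fun y => y ≠ x ∧ c s(x, y) = i

lemma Nb_mono {V : Type} [DecidableEq V] {q : ℕ} (c : Sym2 V → Fin q) (i : Fin q) (x : V)
    {S T : Finset V} (h : S ⊆ T) : Nb c i x S ⊆ Nb c i x T := Finset.filter_subset_filter _ h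

lemma key_step {q : ℕ} {β C : ℝ}
    (hgeo : ∀ {α : Type} (X : Finset α) (_ : X.Nonempty) (Z : Fin q → α → α → ℝ)
      (_ : ∀ i, GramK (Z i)),
    ∃ l : Fin q, ∃ lam : ℝ, -1 ≤ lam ∧ β * Real.exp (-(C * √(lam + 1))) * (X.card : ℝ) ^ 2 ≤
      (((X ×ˢ X).filter fun p => lam ≤ Z l p.1 p.2 ∧ ∀ i, -1 ≤ Z i p.1 p.2).card : ℝ))
    {V : Type} [DecidableEq V] (c : Sym2 V → Fin q) (X : Finset V) (hX : X.Nonempty)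
    (Y : Fin q → Finset V) (d : Fin q → ℕ) (hd : ∀ i, 0 < d i)
    (hdeg : ∀ i, ∀ x ∈ X, d i ≤ (Nb c i x (Y i)).card)
    (α : Fin q → ℝ) (hα : ∀ i, 0 < α i) :
    ∃ x ∈ X, ∃ l : Fin q, ∃ lam : ℝ, -1 ≤ lam ∧ ∃ X' ⊆ X, ∃ Y' : Fin q → Finset V,
      (∀ i, Y' i ⊆ Nb c i x (Y i) ∧ (Y' i).card = d i) ∧
      β * Real.exp (-(C * √(lam + 1))) * (X.card : ℝ) ≤ X'.card ∧
      (∀ y ∈ X', ((d l : ℝ) / (Y l).card + lam * α l) * d l ≤ (Nb c l y (Y' l)).card) ∧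
      (∀ i, ∀ y ∈ X', ((d i : ℝ) / (Y i).card - α i) * d i ≤ (Nb c i y (Y' i)).card) := by
  classical
  have hT : ∀ (i : Fin q) (x : V), ∃ s : Finset V, x ∈ X → s ⊆ Nb c i x (Y i) ∧ s.card = d i := by
    intro i x
    by_cases hx : x ∈ X
    · obtain ⟨s, hs⟩ := Finset.exists_subset_card_eq (hdeg i x hx)
      exact ⟨s, fun _ => hs⟩
    · exact ⟨∅, fun h => absurd h hx⟩
  choose T hT using hT
  set p : Fin q → ℝ := fun i => (d i : ℝ) / (Y i).card with hp
  set Z : Fin q → V → V → ℝ := fun i x y =>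
    (∑ u : {u // u ∈ Y i}, ((if u.1 ∈ T i x then (1 : ℝ) else 0) - p i) / √(α i * d i) *
      (((if u.1 ∈ T i y then (1 : ℝ) else 0) - p i) / √(α i * d i))) with hZ
  have hZG : ∀ i, GramK (Z i) := fun i =>
    ⟨{u // u ∈ Y i}, inferInstance,
      fun u x => ((if u.1 ∈ T i x then (1 : ℝ) else 0) - p i) / √(α i * d i), fun x y => rfl⟩
  have hYpos : ∀ i, 0 < (Y i).card := by
    intro i
    obtain ⟨x, hx⟩ := hX
    exact lt_of_lt_of_le (hd i) ((hdeg i x hx).trans (Finset.card_filter_le _ _))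
  have hTY : ∀ i, ∀ x ∈ X, T i x ⊆ Y i := fun i x hx =>
    (hT i x hx).1.trans (Finset.filter_subset _ _)
  have hZval : ∀ i, ∀ x ∈ X, ∀ y ∈ X, ∀ lam : ℝ, lam ≤ Z i x y →
      (p i + lam * α i) * d i ≤ ((T i x ∩ T i y).card : ℝ) := by
    intro i x hx y hy lam h
    have hd' : (0 : ℝ) < d i := by exact_mod_cast hd i
    have hy' : (0 : ℝ) < (Y i).card := by exact_mod_cast hYpos i
    have had : 0 < α i * d i := mul_pos (hα i) hd'
    have h1 : ∀ x ∈ X, ∑ u ∈ Y i, (if u ∈ T i x then (1 : ℝ) else 0) = d i := by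
      intro x hx
      rw [Finset.sum_boole, Finset.filter_mem_eq_inter, Finset.inter_eq_right.2 (hTY i x hx),
        (hT i x hx).2]
    have h2 : ∑ u ∈ Y i, (if u ∈ T i x then (1 : ℝ) else 0) * (if u ∈ T i y then (1 : ℝ) else 0)
        = (T i x ∩ T i y).card := by
      have : ∀ u, (if u ∈ T i x then (1 : ℝ) else 0) * (if u ∈ T i y then (1 : ℝ) else 0)
        = if u ∈ T i x ∩ T i y then 1 else 0 := by
        intro u
        by_cases a : u ∈ T i x <;> by_cases b : u ∈ T i y <;> simp [a, b]
      simp only [this]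
      rw [Finset.sum_boole, Finset.filter_mem_eq_inter, Finset.inter_eq_right.2]
      exact Finset.inter_subset_left.trans (hTY i x hx)
    have h3 : Z i x y * (α i * d i) = (T i x ∩ T i y).card - p i * d i := by
      have e : Z i x y = ∑ u ∈ Y i, ((if u ∈ T i x then (1 : ℝ) else 0) - p i) / √(α i * d i) *
        (((if u ∈ T i y then (1 : ℝ) else 0) - p i) / √(α i * d i)) := by
        rw [hZ]
        exact Finset.sum_coe_sort (Y i) (fun u => ((if u ∈ T i x then (1 : ℝ) else 0) - p i) / √(α i * d i) *
        (((if u ∈ T i y then (1 : ℝ) else 0) - p i) / √(α i * d i)))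
      rw [e, Finset.sum_mul]
      have e2 : ∀ u ∈ Y i, ((if u ∈ T i x then (1 : ℝ) else 0) - p i) / √(α i * d i) *
        (((if u ∈ T i y then (1 : ℝ) else 0) - p i) / √(α i * d i)) * (α i * d i)
        = (if u ∈ T i x then (1 : ℝ) else 0) * (if u ∈ T i y then (1 : ℝ) else 0)
          - p i * (if u ∈ T i x then (1 : ℝ) else 0) - p i * (if u ∈ T i y then (1 : ℝ) else 0)
          + p i * p i := by
        intro u _
        have hs : √(α i * d i) * √(α i * d i) = α i * d i := Real.mul_self_sqrt had.le
        rw [div_mul_div_comm, hs, div_mul_cancel₀ _ had.ne']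
        ring
      rw [Finset.sum_congr rfl e2, Finset.sum_add_distrib, Finset.sum_sub_distrib,
        Finset.sum_sub_distrib, ← Finset.mul_sum, ← Finset.mul_sum, h2, h1 x hx, h1 y hy]
      simp only [Finset.sum_const, nsmul_eq_mul]
      have : ((Y i).card : ℝ) * p i = d i := by rw [hp]; field_simp
      linear_combination p i * this
    have h4 : lam * (α i * d i) ≤ Z i x y * (α i * d i) := by gcongr
    linarith
  obtain ⟨l, lam, hlam, hcard⟩ := hgeo X hX Z hZG
  have hex : ∃ x ∈ X, β * Real.exp (-(C * √(lam + 1))) * (X.card : ℝ) ≤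
      ((X.filter fun y => lam ≤ Z l x y ∧ ∀ i, -1 ≤ Z i x y).card : ℝ) := by
    by_contra hcon
    push Not at hcon
    have h1 : (((X ×ˢ X).filter fun p => lam ≤ Z l p.1 p.2 ∧ ∀ i, -1 ≤ Z i p.1 p.2).card : ℝ)
      = ∑ x ∈ X, ((X.filter fun y => lam ≤ Z l x y ∧ ∀ i, -1 ≤ Z i x y).card : ℝ) := by
      rw [Finset.card_filter, Finset.sum_product]
      push_cast [Finset.card_filter]
      rfl
    have h2 := Finset.sum_lt_sum_of_nonempty hX hcon
    rw [← h1] at h2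
    simp only [Finset.sum_const, nsmul_eq_mul] at h2
    linarith [show (X.card : ℝ) * (β * Real.exp (-(C * √(lam + 1))) * (X.card : ℝ))
      = β * Real.exp (-(C * √(lam + 1))) * (X.card : ℝ) ^ 2 by ring]
  obtain ⟨x, hx, hxc⟩ := hex
  have hfin : ∀ i, ∀ y ∈ X, ∀ mu : ℝ, mu ≤ Z i x y →
      (p i + mu * α i) * d i ≤ ((Nb c i y (T i x)).card : ℝ) := by
    intro i y hy mu h
    refine (hZval i x hx y hy mu h).trans (Nat.cast_le.2 (Finset.card_le_card ?_))
    intro u hu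
    rw [Finset.mem_inter] at hu
    have := (hT i y hy).1 hu.2
    rw [Nb, Finset.mem_filter] at this ⊢
    exact ⟨hu.1, this.2⟩
  refine ⟨x, hx, l, lam, hlam, _, Finset.filter_subset _ _, fun i => T i x,
    fun i => hT i x hx, hxc, ?_, ?_⟩
  · intro y hy
    rw [Finset.mem_filter] at hy
    exact hfin l y hy.1 lam hy.2.1
  · intro i y hy
    rw [Finset.mem_filter] at hy
    have := hfin i y hy.1 (-1) (hy.2.2 i)
    rw [neg_one_mul, ← sub_eq_add_neg] at this
    exact this


/-- Monochromatic clique in colour `i`. -/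
def MClq {V : Type} {q : ℕ} (c : Sym2 V → Fin q) (i : Fin q) (A : Finset V) : Prop :=
  ∀ u ∈ A, ∀ v ∈ A, u ≠ v → c s(u, v) = i

lemma MClq_insert {V : Type} [DecidableEq V] {q : ℕ} {c : Sym2 V → Fin q} {i : Fin q}
    {A : Finset V} {x : V} (hA : MClq c i A) (hx : ∀ v ∈ A, c s(v, x) = i) :
    MClq c i (insert x A) := by
  intro u hu v hv huv
  rw [Finset.mem_insert] at hu hv
  rcases hu with rfl | hu <;> rcases hv with rfl | hv
  · exact absurd rfl huv
  · rw [Sym2.eq_swap]; exact hx v hv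
  · exact hx u hu
  · exact hA u hu v hv huv

lemma exists_big_Nb {V : Type} [DecidableEq V] {q : ℕ} (c : Sym2 V → Fin q) (x : V) (S : Finset V) :
    ∑ i, (Nb c i x S).card = (S.erase x).card := by
  have : ∀ i, Nb c i x S = (S.erase x).filter fun y => c s(x, y) = i := by
    intro i; ext y; simp only [Nb, Finset.mem_filter, Finset.mem_erase]; tauto
  simp only [this]
  exact (Finset.card_eq_sum_card_fiberwise (t := univ) (fun _ _ => Finset.mem_coe.2 (mem_univ _))).symm

/-- Log of the density potential. -/
noncomputable def zc (p0 δ : ℝ) (d : ℕ) {V : Type} (Y : Finset V) : ℝ :=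
  Real.log (((d : ℝ) / Y.card - p0 + δ) / δ)

/-- The invariant of the book algorithm, for one colour. -/
structure ColInv {V : Type} [DecidableEq V] {q : ℕ} (c : Sym2 V → Fin q) (S : Finset V) (t : ℕ)
    (p0 δ ell D L : ℝ) (i : Fin q) (X Y : Finset V) (d : ℕ) (T : Finset V) : Prop where
  clq : MClq c i T
  TS : T ⊆ S
  YS : Y ⊆ S
  TX : ∀ v ∈ T, ∀ y ∈ X, y ≠ v ∧ c s(v, y) = i
  TY : ∀ v ∈ T, ∀ y ∈ Y, y ≠ v ∧ c s(v, y) = i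
  Tt : T.card ≤ t
  dpos : 0 < d
  deg : ∀ x ∈ X, d ≤ (Nb c i x Y).card
  Q : 0 < (d : ℝ) / Y.card - p0 + δ
  z : 0 ≤ zc p0 δ d Y + 2 * T.card / t
  Ybig : Real.exp (L - ell * (T.card + D * (zc p0 δ d Y + 2 * T.card / t))) ≤ Y.card

section
variable {V : Type} [DecidableEq V] {q : ℕ} {c : Sym2 V → Fin q} {S : Finset V} {t : ℕ}
    {p0 δ ell D L : ℝ} {i : Fin q} {X Y : Finset V} {d : ℕ} {T : Finset V}

lemma ColInv.mono (h : ColInv c S t p0 δ ell D L i X Y d T) {X' : Finset V} (hX : X' ⊆ X) :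
    ColInv c S t p0 δ ell D L i X' Y d T :=
  ⟨h.clq, h.TS, h.YS, fun v hv y hy => h.TX v hv y (hX hy), h.TY, h.Tt, h.dpos,
    fun x hx => h.deg x (hX hx), h.Q, h.z, h.Ybig⟩

lemma ColInv.Ypos (h : ColInv c S t p0 δ ell D L i X Y d T) : 0 < Y.card := by
  have : (0 : ℝ) < Y.card := lt_of_lt_of_le (Real.exp_pos _) h.Ybig
  exact_mod_cast this

lemma ColInv.dle (h : ColInv c S t p0 δ ell D L i X Y d T) (hX : X.Nonempty) : d ≤ Y.card := by
  obtain ⟨x, hx⟩ := hX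
  exact (h.deg x hx).trans (Finset.card_filter_le _ _)

lemma ColInv.zle (h : ColInv c S t p0 δ ell D L i X Y d T) (hX : X.Nonempty) (hδ : 0 < δ)
    (hδp : δ ≤ p0) : zc p0 δ d Y ≤ Real.log (1 / δ) := by
  have hy : (0 : ℝ) < Y.card := by exact_mod_cast h.Ypos
  have h1 : (d : ℝ) / Y.card ≤ 1 := by
    rw [div_le_one hy]; exact_mod_cast h.dle hX
  refine Real.log_le_log (div_pos h.Q hδ) ?_
  gcongr
  linarith

/-- The common update. `ρ` is the guaranteed new density; `g` a lower bound on the change of `z`. -/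
lemma ColInv.update (h : ColInv c S t p0 δ ell D L i X Y d T) (hδ : 0 < δ)
    (hell : 0 ≤ ell) (hD : 0 ≤ D)
    (hell2 : Real.exp (-ell) ≤ p0 - δ)
    {ρ κ : ℝ} (hρ : 0 < ρ) (hκ : 0 < κ)
    (hQ : κ * ((d : ℝ) / Y.card - p0 + δ) ≤ ρ - p0 + δ)
    {x : V} (hxS : x ∈ S) (hxX : x ∈ X) {X' Y' : Finset V} (hX' : X' ⊆ X)
    (hY' : Y' ⊆ Nb c i x Y) (hY'd : Y'.card = d)
    (hdeg : ∀ y ∈ X', ρ * d ≤ (Nb c i y Y').card)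
    {T' : Finset V} (hT' : (T' = T ∧ 1 ≤ D * Real.log κ ∧ 1 ≤ κ) ∨
      (T' = insert x T ∧ T.card < t ∧ (∀ y ∈ X', y ≠ x ∧ c s(x, y) = i) ∧ - (2 / t : ℝ) ≤ Real.log κ)) :
    ColInv c S t p0 δ ell D L i X' Y' ⌈ρ * d⌉₊ T' ∧
      zc p0 δ d Y + Real.log κ ≤ zc p0 δ ⌈ρ * d⌉₊ Y' := by
  have hd : (0 : ℝ) < d := by exact_mod_cast h.dpos
  have hρd : 0 < ρ * d := mul_pos hρ hd
  have hnew : ρ ≤ (⌈ρ * d⌉₊ : ℝ) / Y'.card := by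
    rw [hY'd, le_div_iff₀ hd]; exact Nat.le_ceil _
  have hQ0 := h.Q
  have hQ1 : κ * ((d : ℝ) / Y.card - p0 + δ) ≤ (⌈ρ * d⌉₊ : ℝ) / Y'.card - p0 + δ := by linarith
  have hQ2 : 0 < (⌈ρ * d⌉₊ : ℝ) / Y'.card - p0 + δ := lt_of_lt_of_le (mul_pos hκ hQ0) hQ1
  have hz : zc p0 δ d Y + Real.log κ ≤ zc p0 δ ⌈ρ * d⌉₊ Y' := by
    unfold zc
    rw [← Real.log_mul (div_pos hQ0 hδ).ne' hκ.ne']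
    refine Real.log_le_log (mul_pos (div_pos hQ0 hδ) hκ) ?_
    rw [div_mul_eq_mul_div, mul_comm]
    gcongr
  have hxT : x ∉ T := fun hx => (h.TX x hx x hxX).1 rfl
  have hY'Y : Y' ⊆ Y := hY'.trans (Finset.filter_subset _ _)
  have hYp : (0 : ℝ) < Y.card := by exact_mod_cast h.Ypos
  have hYsz : ∀ a : ℝ, ell * 1 ≤ a →
      Real.exp (L - ell * (T.card + D * (zc p0 δ d Y + 2 * T.card / t)) - a) ≤ Y'.card := by
    intro a ha
    rw [hY'd, sub_eq_add_neg _ a, Real.exp_add]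
    have h1 : Real.exp (-a) ≤ (d : ℝ) / Y.card := by
      refine le_trans (Real.exp_le_exp.2 ?_) (hell2.trans (by linarith : p0 - δ ≤ (d : ℝ) / Y.card))
      linarith
    calc _ ≤ (Y.card : ℝ) * ((d : ℝ) / Y.card) := by
          gcongr
          exact h.Ybig
      _ = d := by field_simp
  refine ⟨?_, hz⟩
  rcases hT' with ⟨rfl, h1, h2⟩ | ⟨rfl, h1, h2, h3⟩
  · have hlog : 0 ≤ Real.log κ := Real.log_nonneg h2
    refine ⟨h.clq, h.TS, hY'Y.trans h.YS, fun v hv y hy => h.TX v hv y (hX' hy),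
      fun v hv y hy => h.TY v hv y (hY'Y hy), h.Tt, Nat.ceil_pos.2 hρd, ?_, hQ2, ?_, ?_⟩
    · intro y hy; exact Nat.ceil_le.2 (hdeg y hy)
    · have := h.z; linarith
    · refine le_trans (Real.exp_le_exp.2 ?_) (hYsz (ell * 1) le_rfl)
      have : D * (zc p0 δ d Y + Real.log κ) ≤ D * zc p0 δ ⌈ρ * d⌉₊ Y' := by gcongr
      have h5 : ell * (T'.card + D * (zc p0 δ d Y + 2 * T'.card / t)) + ell * 1 ≤
          ell * (T'.card + D * (zc p0 δ ⌈ρ * d⌉₊ Y' + 2 * T'.card / t)) := by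
        rw [← mul_add]
        refine mul_le_mul_of_nonneg_left ?_ hell
        rw [mul_add D, mul_add D]
        rw [mul_add D] at this
        linarith
      linarith
  · have hc : ((insert x T).card : ℝ) = T.card + 1 := by
      rw [Finset.card_insert_of_notMem hxT]; push_cast; ring
    have hz2 : zc p0 δ d Y + 2 * T.card / t ≤
        zc p0 δ ⌈ρ * d⌉₊ Y' + 2 * ((insert x T).card : ℝ) / t := by
      rw [hc]
      have : 2 * ((T.card : ℝ) + 1) / t = 2 * T.card / t + 2 / t := by ring
      rw [this]; linarith
    refine ⟨MClq_insert h.clq fun v hv => (h.TX v hv x hxX).2, ?_, hY'Y.trans h.YS, ?_, ?_,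
      ?_, Nat.ceil_pos.2 hρd, ?_, hQ2, ?_, ?_⟩
    · exact Finset.insert_subset hxS h.TS
    · intro v hv y hy
      rcases Finset.mem_insert.1 hv with rfl | hv
      · exact h2 y hy
      · exact h.TX v hv y (hX' hy)
    · intro v hv y hy
      rcases Finset.mem_insert.1 hv with rfl | hv
      · exact (Finset.mem_filter.1 (hY' hy)).2
      · exact h.TY v hv y (hY'Y hy)
    · rw [Finset.card_insert_of_notMem hxT]; exact h1
    · intro y hy; exact Nat.ceil_le.2 (hdeg y hy)
    · exact h.z.trans hz2
    · refine le_trans (Real.exp_le_exp.2 ?_) (hYsz (ell * 1) le_rfl)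
      have h5 : ell * (T.card + D * (zc p0 δ d Y + 2 * T.card / t)) + ell * 1 ≤
          ell * ((insert x T).card +
            D * (zc p0 δ ⌈ρ * d⌉₊ Y' + 2 * ((insert x T).card : ℝ) / t)) := by
        rw [← mul_add]
        have : D * (zc p0 δ d Y + 2 * T.card / t) ≤
          D * (zc p0 δ ⌈ρ * d⌉₊ Y' + 2 * ((insert x T).card : ℝ) / t) :=
          mul_le_mul_of_nonneg_left hz2 hD
        refine mul_le_mul_of_nonneg_left ?_ hell
        linarith
      linarith

end

/-- A book in colour `j`. -/
def HasBook {V : Type} {q : ℕ} (c : Sym2 V → Fin q) (S : Finset V) (t : ℕ) (m : ℝ) : Prop :=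
  ∃ j, ∃ A B : Finset V, A ⊆ S ∧ B ⊆ S ∧ A.card = t ∧ MClq c j A ∧
    (∀ v ∈ A, ∀ y ∈ B, y ≠ v ∧ c s(v, y) = j) ∧ m ≤ B.card

set_option maxHeartbeats 4000000 in
lemma book_algorithm {q : ℕ} (hq : 1 ≤ q) {β C : ℝ} (hβ : 0 < β)
    (hgeo : ∀ {α : Type} (X : Finset α) (_ : X.Nonempty) (Z : Fin q → α → α → ℝ)
      (_ : ∀ i, GramK (Z i)),
    ∃ l : Fin q, ∃ lam : ℝ, -1 ≤ lam ∧ β * Real.exp (-(C * √(lam + 1))) * (X.card : ℝ) ^ 2 ≤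
      (((X ×ˢ X).filter fun p => lam ≤ Z l p.1 p.2 ∧ ∀ i, -1 ≤ Z i p.1 p.2).card : ℝ))
    {V : Type} [DecidableEq V] (c : Sym2 V → Fin q) (S : Finset V) {t : ℕ} (ht : 2 ≤ t)
    {p0 δ ell D L L0 lam0 Ac B : ℝ} (hδ : 0 < δ) (hδp : δ ≤ p0) (hell : 0 ≤ ell) (hD : 0 ≤ D)
    (hell2 : Real.exp (-ell) ≤ p0 - δ) (hAc : 0 ≤ Ac) (hB : 0 ≤ B) (hlam0 : 0 < lam0)
    (H1 : ∀ lam, -1 ≤ lam → lam ≤ lam0 →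
      Real.exp (-Ac) ≤ β * Real.exp (-(C * √(lam + 1))) / (2 * q))
    (H2 : ∀ lam, lam0 ≤ lam → lam ≤ 8 * t / δ →
      Real.exp (-(B * Real.log (1 + lam / t))) ≤ β * Real.exp (-(C * √(lam + 1))))
    (H3 : ∀ lam, lam0 ≤ lam → 1 ≤ D * Real.log (1 + lam / t))
    (HL : q * (t * Ac + 2 * B + Real.log (1 / δ) * B) + Ac + 1 ≤ L0) :
    ∀ (n : ℕ) (X : Finset V) (Y : Fin q → Finset V) (d : Fin q → ℕ) (T : Fin q → Finset V),
      X ⊆ S → (∀ i, ColInv c S t p0 δ ell D L i X (Y i) (d i) (T i)) →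
      Real.exp (L0 - ∑ i, ((T i).card * (Ac + 2 * B / t) + zc p0 δ (d i) (Y i) * B)) ≤ X.card →
      ∑ i, ((Y i).card + (t - (T i).card)) ≤ n →
      HasBook c S t (Real.exp (L - ell * (t + D * (Real.log (1 / δ) + 2)))) := by
  have ht0 : (0 : ℝ) < t := by exact_mod_cast (by omega : 0 < t)
  have hq0 : (0 : ℝ) < q := by exact_mod_cast hq
  intro n
  induction n with
  | zero =>
    intro X Y d T hXS hI hX hn
    have h1 := (hI ⟨0, hq⟩).Ypos
    have h2 := Finset.single_le_sum (f := fun i => (Y i).card + (t - (T i).card))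
      (fun _ _ => Nat.zero_le _) (mem_univ ⟨0, hq⟩)
    have h2' : (Y ⟨0, hq⟩).card + (t - (T ⟨0, hq⟩).card) ≤ 0 := h2.trans hn
    omega
  | succ n ih =>
    intro X Y d T hXS hI hX hn
    have hXne : X.Nonempty := by
      have : (0 : ℝ) < X.card := lt_of_lt_of_le (Real.exp_pos _) hX
      exact Finset.card_pos.1 (by exact_mod_cast this)
    by_cases hdone : ∃ j, (T j).card = t
    · obtain ⟨j, hj⟩ := hdone
      refine ⟨j, T j, Y j, (hI j).TS, (hI j).YS, hj, (hI j).clq, (hI j).TY, ?_⟩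
      refine le_trans (Real.exp_le_exp.2 ?_) (hI j).Ybig
      have h1 := (hI j).zle hXne hδ hδp
      rw [hj]
      have h2 : 2 * (t : ℝ) / t = 2 := by field_simp
      rw [h2]
      gcongr
    push Not at hdone
    have hTlt : ∀ i, (T i).card < t := fun i => lt_of_le_of_ne (hI i).Tt (hdone i)
    -- lower bound on X
    have hXbig : Real.exp (Ac + 1) ≤ X.card := by
      refine le_trans (Real.exp_le_exp.2 ?_) hX
      have : ∑ i, ((T i).card * (Ac + 2 * B / t) + zc p0 δ (d i) (Y i) * B) ≤
          ∑ i : Fin q, (t * Ac + 2 * B + Real.log (1 / δ) * B) := by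
        refine Finset.sum_le_sum fun i _ => ?_
        have h1 := (hI i).zle hXne hδ hδp
        have h2 : ((T i).card : ℝ) ≤ t := by exact_mod_cast (hI i).Tt
        have h3 : (t : ℝ) * (Ac + 2 * B / t) = t * Ac + 2 * B := by field_simp
        rw [← h3]
        gcongr
      simp only [Finset.sum_const, Finset.card_univ, Fintype.card_fin, nsmul_eq_mul] at this
      linarith
    obtain ⟨x, hxX, l, lam, hlam, X', hX'X, Y', hY', hX'c, hl, hall⟩ :=
      key_step hgeo c X hXne Y d (fun i => (hI i).dpos) (fun i => (hI i).deg)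
        (fun i => ((d i : ℝ) / (Y i).card - p0 + δ) / t) (fun i => div_pos (hI i).Q ht0)
    have hXpos : (0 : ℝ) < X.card := by exact_mod_cast hXne.card_pos
    have hX'pos : (0 : ℝ) < X'.card := lt_of_lt_of_le (by positivity) hX'c
    have hX'ne : X'.Nonempty := Finset.card_pos.1 (by exact_mod_cast hX'pos)
    have hdpos : ∀ i, (0 : ℝ) < d i := fun i => by exact_mod_cast (hI i).dpos
    rcases le_or_gt lam lam0 with hle | hgt
    · -- colour step
      have h1 := H1 lam hlam hle
      have hX'2 : Real.exp (-Ac) * X.card * (2 * q) ≤ X'.card := by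
        refine le_trans ?_ hX'c
        rw [le_div_iff₀ (by positivity)] at h1
        calc _ = Real.exp (-Ac) * (2 * q) * X.card := by ring
          _ ≤ _ := by gcongr
      have hge : Real.exp 1 ≤ Real.exp (-Ac) * X.card := by
        calc Real.exp 1 = Real.exp (-Ac) * Real.exp (Ac + 1) := by
              rw [← Real.exp_add]; congr 1; ring
          _ ≤ _ := by gcongr
      have he1 : 2 ≤ Real.exp 1 := by have := Real.add_one_le_exp (1 : ℝ); linarith
      have hq1 : (1 : ℝ) ≤ q := by exact_mod_cast hq
      have hX'ge2 : (2 : ℝ) ≤ X'.card := by nlinarith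
      obtain ⟨j, hj⟩ : ∃ j, Real.exp (-Ac) * X.card ≤ (Nb c j x X').card := by
        by_contra hcon
        push Not at hcon
        have h3 := exists_big_Nb c x X'
        have h4 : X'.card - 1 ≤ (X'.erase x).card := Finset.pred_card_le_card_erase
        have h5 : ∑ j, ((Nb c j x X').card : ℝ) < ∑ j : Fin q, Real.exp (-Ac) * X.card :=
          Finset.sum_lt_sum_of_nonempty ⟨⟨0, hq⟩, mem_univ _⟩ fun j _ => hcon j
        simp only [Finset.sum_const, Finset.card_univ, Fintype.card_fin, nsmul_eq_mul] at h5
        rw [← Nat.cast_sum, h3] at h5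
        have h6 : (X'.card : ℝ) ≤ (X'.erase x).card + 1 := by
          exact_mod_cast (by omega : X'.card ≤ (X'.erase x).card + 1)
        nlinarith
      have hNX' : Nb c j x X' ⊆ X' := Finset.filter_subset _ _
      have hp := (hI j).Q
      have hinv : (1 : ℝ) / t ≤ 1 / 2 := by
        refine one_div_le_one_div_of_le (by norm_num) ?_
        exact_mod_cast ht
      set Qj := (d j : ℝ) / (Y j).card - p0 + δ with hQj
      have hup := (hI j).update hδ hell hD hell2 (ρ := (d j : ℝ) / (Y j).card - Qj / t)
        (κ := 1 - 1 / t) (by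
          have : Qj / t ≤ Qj * (1/2) := by
            rw [div_eq_mul_one_div]; gcongr
          linarith [Real.exp_pos (-ell)]) (by linarith) (by rw [← hQj]; apply le_of_eq; ring_nf; rw [hQj]; ring)
        (hXS hxX) hxX (hNX'.trans hX'X) (hY' j).1 (hY' j).2
        (fun y hy => hall j y (hNX' hy))
        (T' := insert x (T j)) (Or.inr ⟨rfl, hTlt j, fun y hy => (Finset.mem_filter.1 hy).2, by
          have h7 := Real.one_sub_inv_le_log_of_pos (x := 1 - 1 / (t : ℝ)) (by linarith)
          refine le_trans ?_ h7
          have h8 : (1 - 1 / (t : ℝ))⁻¹ ≤ 1 + 2 / t := by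
            rw [inv_le_iff_one_le_mul₀ (by linarith)]
            have : (0 : ℝ) < 1 / t := by positivity
            have e : (2 : ℝ) / t = 2 * (1 / t) := by ring
            rw [e]
            nlinarith
          linarith⟩)
      obtain ⟨hup1, hup2⟩ := hup
      have hlogk : -(2 / t : ℝ) ≤ Real.log (1 - 1 / t) := by
        have h7 := Real.one_sub_inv_le_log_of_pos (x := 1 - 1 / (t : ℝ)) (by linarith)
        refine le_trans ?_ h7
        have h8 : (1 - 1 / (t : ℝ))⁻¹ ≤ 1 + 2 / t := by
          rw [inv_le_iff_one_le_mul₀ (by linarith)]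
          have : (0 : ℝ) < 1 / t := by positivity
          have e : (2 : ℝ) / t = 2 * (1 / t) := by ring
          rw [e]
          nlinarith
        linarith
      set dn := ⌈((d j : ℝ) / (Y j).card - Qj / t) * d j⌉₊ with hdn
      have hxT : x ∉ T j := fun hx => ((hI j).TX x hx x hxX).1 rfl
      refine ih (Nb c j x X') (Function.update Y j (Y' j)) (Function.update d j dn)
        (Function.update T j (insert x (T j))) ((hNX'.trans hX'X).trans hXS) ?_ ?_ ?_
      · intro i
        by_cases hij : i = j
        · subst hij; simpa using hup1
        · simpa [Function.update_of_ne hij] using (hI i).mono (hNX'.trans hX'X)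
      · refine le_trans ?_ hj
        rw [← Finset.add_sum_erase univ _ (mem_univ j)] at hX ⊢
        have hs : ∑ i ∈ univ.erase j, (((Function.update T j (insert x (T j)) i).card : ℝ) *
            (Ac + 2 * B / t) + zc p0 δ (Function.update d j dn i) (Function.update Y j (Y' j) i) * B)
            = ∑ i ∈ univ.erase j, ((T i).card * (Ac + 2 * B / t) + zc p0 δ (d i) (Y i) * B) := by
          refine Finset.sum_congr rfl fun i hi => ?_
          have hij := (Finset.mem_erase.1 hi).1
          simp [Function.update_of_ne hij]
        rw [hs]
        simp only [Function.update_self]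
        rw [Finset.card_insert_of_notMem hxT]
        refine le_trans (Real.exp_le_exp.2 ?_) (le_of_eq_of_le (Real.exp_add (-Ac) _)
          (mul_le_mul_of_nonneg_left hX (Real.exp_pos _).le))
        have h9 : (zc p0 δ (d j) (Y j) - 2 / t) * B ≤ zc p0 δ dn (Y' j) * B := by
          gcongr
          linarith
        have h10 : (2 : ℝ) / t * B = 2 * B / t := by ring
        push_cast
        nlinarith
      · refine Nat.le_of_lt_succ (lt_of_lt_of_le ?_ hn)
        refine Finset.sum_lt_sum (fun i _ => ?_) ⟨j, mem_univ j, ?_⟩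
        · by_cases hij : i = j
          · subst hij
            have h1 := hTlt i
            simp only [Function.update_self, Finset.card_insert_of_notMem hxT, (hY' i).2]
            have := (hI i).dle hXne
            omega
          · simp [Function.update_of_ne hij]
        · have h1 := hTlt j
          simp only [Function.update_self, Finset.card_insert_of_notMem hxT, (hY' j).2]
          have := (hI j).dle hXne
          omega
    · -- boost step
      set Ql := (d l : ℝ) / (Y l).card - p0 + δ with hQl
      have hQpos : 0 < Ql := (hI l).Q
      have hp := (hI l).Q
      have hlampos : 0 < lam := hlam0.trans hgt
      have hρ1 : (d l : ℝ) / (Y l).card + lam * (Ql / t) ≤ 1 := by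
        obtain ⟨y, hy⟩ := hX'ne
        have h1 := hl y hy
        have h2 : ((Nb c l y (Y' l)).card : ℝ) ≤ d l := by
          rw [← (hY' l).2]; exact_mod_cast Finset.card_filter_le _ _
        have := h1.trans h2
        by_contra hcon
        push Not at hcon
        have := hdpos l
        nlinarith
      have hdl : (d l : ℝ) / (Y l).card < 1 := by
        have : 0 < lam * (Ql / t) := by positivity
        linarith
      have hQlow : δ / 8 ≤ Ql := by
        have h1 := (hI l).z
        have h2 : (2 : ℝ) * (T l).card / t ≤ 2 := by
          rw [div_le_iff₀ ht0]
          have : ((T l).card : ℝ) ≤ t := by exact_mod_cast (hI l).Tt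
          linarith
        have h3 : -2 ≤ Real.log (Ql / δ) := by
          have : zc p0 δ (d l) (Y l) = Real.log (Ql / δ) := rfl
          linarith
        have h4 := (Real.le_log_iff_exp_le (div_pos hQpos hδ)).1 h3
        have h5 : (1 : ℝ) / 8 ≤ Real.exp (-2) := by
          rw [Real.exp_neg, inv_eq_one_div]
          refine one_div_le_one_div_of_le (Real.exp_pos _) ?_
          have h6 := Real.exp_one_lt_d9
          have h7 : Real.exp 2 = Real.exp 1 * Real.exp 1 := by rw [← Real.exp_add]; norm_num
          rw [h7]
          have := Real.exp_pos 1
          nlinarith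
        have h6 := h5.trans h4
        rw [le_div_iff₀ hδ] at h6
        linarith
      have hlamle : lam ≤ 8 * t / δ := by
        rw [le_div_iff₀ hδ]
        have h1 : lam * (Ql / t) ≤ 1 := by
          have : 0 < (d l : ℝ) / (Y l).card := by
            have := hdpos l
            have := (hI l).Ypos
            positivity
          linarith
        have h2 : lam * Ql ≤ t := by
          rw [← mul_div_assoc, div_le_one ht0] at h1
          exact h1
        nlinarith
      have hκ1 : 1 ≤ 1 + lam / t := by
        have : 0 < lam / t := by positivity
        linarith
      have hup := (hI l).update hδ hell hD hell2 (ρ := (d l : ℝ) / (Y l).card + lam * (Ql / t))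
        (κ := 1 + lam / t) (by
          have := hdpos l
          have := (hI l).Ypos
          positivity) (by linarith)
        (by rw [← hQl]; apply le_of_eq; ring_nf; rw [hQl]; ring)
        (hXS hxX) hxX hX'X (hY' l).1 (hY' l).2 hl
        (T' := T l) (Or.inl ⟨rfl, H3 lam hgt.le, hκ1⟩)
      obtain ⟨hup1, hup2⟩ := hup
      set dn := ⌈((d l : ℝ) / (Y l).card + lam * (Ql / t)) * d l⌉₊ with hdn
      refine ih X' (Function.update Y l (Y' l)) (Function.update d l dn) T (hX'X.trans hXS) ?_ ?_ ?_
      · intro i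
        by_cases hij : i = l
        · subst hij; simpa using hup1
        · simpa [Function.update_of_ne hij] using (hI i).mono hX'X
      · refine le_trans ?_ hX'c
        rw [← Finset.add_sum_erase univ _ (mem_univ l)] at hX ⊢
        have hs : ∑ i ∈ univ.erase l, (((T i).card : ℝ) *
            (Ac + 2 * B / t) + zc p0 δ (Function.update d l dn i) (Function.update Y l (Y' l) i) * B)
            = ∑ i ∈ univ.erase l, ((T i).card * (Ac + 2 * B / t) + zc p0 δ (d i) (Y i) * B) := by
          refine Finset.sum_congr rfl fun i hi => ?_
          have hij := (Finset.mem_erase.1 hi).1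
          simp [Function.update_of_ne hij]
        rw [hs]
        simp only [Function.update_self]
        have h2 := H2 lam hgt.le hlamle
        refine le_trans ?_ (mul_le_mul h2 hX (Real.exp_pos _).le (by positivity))
        rw [← Real.exp_add]
        refine Real.exp_le_exp.2 ?_
        have h9 : (zc p0 δ (d l) (Y l) + Real.log (1 + lam / t)) * B ≤ zc p0 δ dn (Y' l) * B := by
          gcongr
        linarith
      · refine Nat.le_of_lt_succ (lt_of_lt_of_le ?_ hn)
        have hlt : d l < (Y l).card := by
          rw [div_lt_one (by exact_mod_cast (hI l).Ypos)] at hdl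
          exact_mod_cast hdl
        refine Finset.sum_lt_sum (fun i _ => ?_) ⟨l, mem_univ l, ?_⟩
        · by_cases hij : i = l
          · subst hij
            simp only [Function.update_self, (hY' i).2]
            omega
          · simp [Function.update_of_ne hij]
        · simp only [Function.update_self, (hY' l).2]
          omega


lemma log_one_add_ge {u : ℝ} (h0 : 0 ≤ u) (h1 : u ≤ 1) : u / 2 ≤ Real.log (1 + u) := by
  have h := Real.one_sub_inv_le_log_of_pos (x := 1 + u) (by linarith)
  refine le_trans ?_ h
  have : (1 + u)⁻¹ ≤ 1 - u / 2 := by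
    rw [inv_le_iff_one_le_mul₀ (by linarith)]
    nlinarith
  linarith

set_option maxHeartbeats 4000000 in
lemma book_numeric {q : ℕ} (hq : 1 ≤ q) {β C : ℝ} (hβ : 0 < β) (hβ1 : β ≤ 1) (hC : 0 < C)
    (hgeo : ∀ {α : Type} (X : Finset α) (_ : X.Nonempty) (Z : Fin q → α → α → ℝ)
      (_ : ∀ i, GramK (Z i)),
    ∃ l : Fin q, ∃ lam : ℝ, -1 ≤ lam ∧ β * Real.exp (-(C * √(lam + 1))) * (X.card : ℝ) ^ 2 ≤
      (((X ×ˢ X).filter fun p => lam ≤ Z l p.1 p.2 ∧ ∀ i, -1 ≤ Z i p.1 p.2).card : ℝ))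
    {κ v M l : ℝ} (hκ : 0 < κ) (hl : l = Real.log (2 * q))
    (hM : M = (q + 1) * (2 * C + Real.log (2 * q / β)) +
      q * (2 * (Real.log (1 / β) + 2 * C)) * (2 + 2 * q) + 1)
    (hv2 : 2 ≤ v) (hvM : M ≤ κ * v ^ 2) (hvl : 2 + 2 * (l + 1) * (l + 10) ≤ κ * v)
    {t : ℕ} (ht : 16 * q * (v ^ 8) ^ 2 ≤ t) {p : ℝ} (hp : 1 / (2 * q) ≤ p) (hp1 : p ≤ 1)
    {V : Type} [DecidableEq V] (c : Sym2 V → Fin q) (S : Finset V)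
    (hS : ∀ x ∈ S, ∀ i, p * S.card ≤ (Nb c i x S).card)
    (hSbig : Real.exp (κ * t / (v ^ 6)⁻¹) ≤ S.card) :
    HasBook c S t (S.card * p ^ t * Real.exp (-(κ * (v ^ 6)⁻¹ * t))) := by
  have hq1 : (1 : ℝ) ≤ q := by exact_mod_cast hq
  have hq0 : (0 : ℝ) < q := by linarith
  have hv1 : 1 ≤ v := by linarith
  have hv0 : 0 < v := by linarith
  set Λ := v ^ 8 with hΛ
  have hΛ2 : 2 ≤ Λ := by
    calc (2:ℝ) ≤ v := hv2
      _ = v ^ 1 := (pow_one v).symm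
      _ ≤ v ^ 8 := pow_le_pow_right₀ hv1 (by norm_num)
  have hΛ0 : 0 < Λ := by linarith
  have hsq : √Λ = v ^ 4 := by
    rw [hΛ, show v ^ 8 = (v ^ 4) ^ 2 by ring]; exact Real.sqrt_sq (by positivity)
  have hp0 : 0 < p := lt_of_lt_of_le (by positivity) hp
  have htΛ : Λ ≤ t := by
    refine le_trans ?_ ht
    nlinarith [mul_le_mul hq1 hΛ2 (by norm_num) hq0.le]
  have ht2 : (2 : ℝ) ≤ t := hΛ2.trans htΛ
  have ht0 : (0 : ℝ) < t := by linarith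
  have ht2' : 2 ≤ t := by exact_mod_cast ht2
  set ν := Λ⁻¹ with hν
  have hν0 : 0 < ν := by positivity
  have hν2 : ν ≤ 1 / 2 := by
    rw [hν, inv_eq_one_div]; exact one_div_le_one_div_of_le (by norm_num) hΛ2
  set δ := p * ν with hδ
  have hδ0 : 0 < δ := by positivity
  have hδp : δ ≤ p := by nlinarith
  have hpd : p - δ = p * (1 - ν) := by rw [hδ]; ring
  have hpd0 : 0 < p - δ := by rw [hpd]; exact mul_pos hp0 (by linarith)
  have hpd1 : p - δ ≤ 1 := by linarith
  set ell := - Real.log (p - δ) with hell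
  have hell0 : 0 ≤ ell := by rw [hell]; linarith [Real.log_nonpos hpd0.le hpd1]
  have hell2 : Real.exp (-ell) ≤ p - δ := by rw [hell, neg_neg, Real.exp_log hpd0]
  have hlogp : -Real.log p ≤ l := by
    rw [hl, ← Real.log_inv]
    refine Real.log_le_log (by positivity) ?_
    rw [inv_le_comm₀ hp0 (by positivity), inv_eq_one_div]; exact hp
  have hl0 : 0 ≤ l := by rw [hl]; exact Real.log_nonneg (by linarith)
  have helle : ell ≤ -Real.log p + 2 * ν := by
    rw [hell, hpd, Real.log_mul hp0.ne' (by linarith)]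
    have h := Real.one_sub_inv_le_log_of_pos (x := 1 - ν) (by linarith)
    have : (1 - ν)⁻¹ ≤ 1 + 2 * ν := by
      rw [inv_le_iff_one_le_mul₀ (by linarith)]
      nlinarith
    linarith
  have hlogδ : Real.log (1 / δ) ≤ l + 8 * v := by
    have h1 : Real.log (1 / δ) = -Real.log p + 8 * Real.log v := by
      rw [one_div, Real.log_inv, hδ, Real.log_mul hp0.ne' hν0.ne', hν, Real.log_inv, hΛ,
        Real.log_pow]
      push_cast; ring
    have h2 := Real.log_le_sub_one_of_pos hv0
    rw [h1]; linarith
  have hlogδ0 : 0 ≤ Real.log (1 / δ) := Real.log_nonneg (by rw [le_div_iff₀ hδ0]; linarith)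
  have hlogδ2 : Real.log (1 / δ) ≤ 2 * q * Λ := by
    have h1 := Real.log_le_sub_one_of_pos (x := 1 / δ) (by positivity)
    have h2 : 1 / δ ≤ 2 * q * Λ := by
      rw [div_le_iff₀ hδ0, hδ, hν]
      rw [div_le_iff₀ (by positivity)] at hp
      have : 2 * q * Λ * (p * Λ⁻¹) = p * (2 * q) := by field_simp
      rw [this]; exact hp
    linarith
  set C2 := Real.log (1 / β) + 2 * C with hC2
  have hlβ : 0 ≤ Real.log (1 / β) := Real.log_nonneg (by rw [le_div_iff₀ hβ]; linarith)
  have hC20 : 0 < C2 := by linarith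
  set B := 2 * C2 * t / v ^ 4 with hB
  have hB0 : 0 ≤ B := by positivity
  set D := 2 * t / Λ with hD
  have hD0 : 0 ≤ D := by positivity
  set Ac := C * √(Λ + 1) + Real.log (2 * q / β) with hAc
  have hlqβ : 0 ≤ Real.log (2 * q / β) := Real.log_nonneg (by rw [le_div_iff₀ hβ]; nlinarith)
  have hAc0 : 0 ≤ Ac := by positivity
  have hsq2 : ∀ x : ℝ, 1 ≤ x → √(x + 1) ≤ 2 * √x := by
    intro x hx
    rw [show (2 : ℝ) * √x = √(4 * x) by
      rw [Real.sqrt_mul (by norm_num), show (4 : ℝ) = 2 ^ 2 by norm_num, Real.sqrt_sq (by norm_num)]]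
    exact Real.sqrt_le_sqrt (by linarith)
  have hSpos : (0 : ℝ) < S.card := lt_of_lt_of_le (Real.exp_pos _) hSbig
  have hpS : 0 < p * S.card := mul_pos hp0 hSpos
  have hzc : 0 ≤ zc p δ ⌈p * S.card⌉₊ S := by
    refine Real.log_nonneg ?_
    rw [le_div_iff₀ hδ0]
    have : p ≤ (⌈p * S.card⌉₊ : ℝ) / S.card := by
      rw [le_div_iff₀ hSpos]; exact Nat.le_ceil _
    linarith
  have hQ : δ ≤ (⌈p * S.card⌉₊ : ℝ) / S.card - p + δ := by
    have : p ≤ (⌈p * S.card⌉₊ : ℝ) / S.card := by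
      rw [le_div_iff₀ hSpos]; exact Nat.le_ceil _
    linarith
  have hAcB : Ac ≤ (2 * C + Real.log (2 * q / β)) * v ^ 4 := by
    have h1 := hsq2 Λ (by linarith)
    rw [hsq] at h1
    have h2 : (1 : ℝ) ≤ v ^ 4 := one_le_pow₀ hv1
    have h3 := mul_le_mul_of_nonneg_left h1 hC.le
    have h4 := mul_le_mul_of_nonneg_left h2 hlqβ
    rw [hAc]; nlinarith
  have H := book_algorithm hq hβ hgeo c S ht2' (p0 := p) (δ := δ) (ell := ell) (D := D)
    (L := Real.log S.card) (L0 := Real.log S.card) (lam0 := Λ) (Ac := Ac) (B := B)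
    hδ0 hδp hell0 hD0 hell2 hAc0 hB0 hΛ0 ?_ ?_ ?_ ?_ _ S (fun _ => S) (fun _ => ⌈p * S.card⌉₊)
    (fun _ => ∅) Finset.Subset.rfl ?_ ?_ le_rfl
  · -- final
    obtain ⟨j, A, Bk, h1, h2, h3, h4, h5, h6⟩ := H
    refine ⟨j, A, Bk, h1, h2, h3, h4, h5, le_trans ?_ h6⟩
    have e1 : (S.card : ℝ) * p ^ t * Real.exp (-(κ * (v ^ 6)⁻¹ * t)) =
        Real.exp (Real.log S.card + t * Real.log p + -(κ * (v ^ 6)⁻¹ * t)) := by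
      rw [Real.exp_add, Real.exp_add, Real.exp_log hSpos, ← Real.log_pow, Real.exp_log (by positivity)]
    rw [e1]
    refine Real.exp_le_exp.2 ?_
    have g1 : ell ≤ l + 1 := by linarith
    have g2 : ell * (D * (Real.log (1 / δ) + 2)) ≤ (l + 1) * (D * (l + 8 * v + 2)) := by
      gcongr
    have g3 : ell * t ≤ (-Real.log p + 2 * ν) * t := by gcongr
    have g4 : (2 * ν) * t + (l + 1) * (D * (l + 8 * v + 2)) ≤ κ * (v ^ 6)⁻¹ * t := by
      have e2 : (2 * ν) * t + (l + 1) * (D * (l + 8 * v + 2)) =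
          t * (v ^ 8)⁻¹ * (2 + 2 * (l + 1) * (l + 2 + 8 * v)) := by
        rw [hν, hD, hΛ]; field_simp; ring
      have e3 : κ * (v ^ 6)⁻¹ * t = t * (v ^ 8)⁻¹ * (κ * v * v) := by
        field_simp
      rw [e2, e3]
      gcongr
      have k1 : 2 + 2 * (l + 1) * (l + 2 + 8 * v) ≤ (2 + 2 * (l + 1) * (l + 10)) * v := by
        have k2 : l + 2 + 8 * v ≤ (l + 10) * v := by nlinarith
        have k3 := mul_le_mul_of_nonneg_left k2 (by linarith : 0 ≤ 2 * (l + 1))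
        linarith
      exact k1.trans (by gcongr)
    linarith
  · -- H1
    intro lam h1 h2
    have e1 : Real.exp (-Ac) = β * Real.exp (-(C * √(Λ + 1))) / (2 * q) := by
      rw [hAc, neg_add, Real.exp_add, Real.exp_neg (Real.log _), Real.exp_log (by positivity)]
      field_simp
    rw [e1]
    gcongr
  · -- H2
    intro lam h1 h2
    have hlam1 : 1 ≤ lam := by linarith
    have hlam0 : 0 < lam := by linarith
    have e1 : β * Real.exp (-(C * √(lam + 1))) = Real.exp (-(Real.log (1 / β) + C * √(lam + 1))) := by
      rw [neg_add, Real.exp_add, Real.exp_neg (Real.log _), Real.exp_log (by positivity)]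
      field_simp
    rw [e1]
    refine Real.exp_le_exp.2 (neg_le_neg ?_)
    have hsl : 1 ≤ √lam := by rw [Real.one_le_sqrt]; exact hlam1
    have k1 : Real.log (1 / β) + C * √(lam + 1) ≤ C2 * √lam := by
      have := hsq2 lam hlam1
      have a1 := mul_le_mul_of_nonneg_left this hC.le
      have a2 := mul_le_mul_of_nonneg_left hsl hlβ
      rw [hC2]; nlinarith
    refine k1.trans ?_
    have hss : √lam * √lam = lam := Real.mul_self_sqrt hlam0.le
    rcases le_or_gt lam t with hc | hc
    · have a1 := log_one_add_ge (u := lam / t) (by positivity) (by rw [div_le_one ht0]; exact hc)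
      have a2 : v ^ 4 ≤ √lam := by rw [← hsq]; exact Real.sqrt_le_sqrt h1
      calc C2 * √lam ≤ C2 * (lam / v ^ 4) := by
            gcongr
            rw [le_div_iff₀ (by positivity)]
            calc √lam * v ^ 4 ≤ √lam * √lam := by gcongr
              _ = lam := hss
        _ = B * (lam / t / 2) := by rw [hB]; field_simp
        _ ≤ _ := by gcongr
    · have a1 : (1 : ℝ) / 2 ≤ Real.log (1 + lam / t) := by
        have b1 := log_one_add_ge (u := 1) (by norm_num) le_rfl
        refine b1.trans (Real.log_le_log (by norm_num) ?_)
        have : 1 ≤ lam / t := by rw [le_div_iff₀ ht0]; linarith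
        linarith
      have a2 : lam ≤ (t / v ^ 4) ^ 2 := by
        have b1 : lam * δ ≤ 8 * t := by rwa [le_div_iff₀ hδ0] at h2
        have b2 : 1 / (2 * q) * Λ⁻¹ ≤ δ := by rw [hδ]; gcongr
        have b3 : lam * (1 / (2 * q) * Λ⁻¹) ≤ 8 * t := le_trans (by gcongr) b1
        have b4 : lam ≤ 16 * q * Λ * t := by
          have : lam * (1 / (2 * q) * Λ⁻¹) = lam / (2 * q * Λ) := by field_simp
          rw [this, div_le_iff₀ (by positivity)] at b3
          linarith
        have b5 : (t / v ^ 4) ^ 2 = t * t / Λ := by rw [hΛ]; field_simp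
        rw [b5, le_div_iff₀ hΛ0]
        calc lam * Λ ≤ 16 * q * Λ * t * Λ := by gcongr
          _ = 16 * q * Λ ^ 2 * t := by ring
          _ ≤ t * t := by gcongr
      have a3 : √lam ≤ t / v ^ 4 := Real.sqrt_le_iff.2 ⟨by positivity, a2⟩
      calc C2 * √lam ≤ C2 * (t / v ^ 4) := by gcongr
        _ = B * (1 / 2) := by rw [hB]; field_simp
        _ ≤ _ := by gcongr
  · -- H3
    intro lam h1
    have a1 := log_one_add_ge (u := Λ / t) (by positivity) (by rw [div_le_one ht0]; exact htΛ)
    calc (1 : ℝ) = D * (Λ / t / 2) := by rw [hD]; field_simp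
      _ ≤ D * Real.log (1 + Λ / t) := by gcongr
      _ ≤ _ := by gcongr
  · -- HL
    have hlS : κ * t / (v ^ 6)⁻¹ ≤ Real.log S.card := (Real.le_log_iff_exp_le hSpos).2 hSbig
    refine le_trans ?_ hlS
    have hv4 : (1 : ℝ) ≤ v ^ 4 := one_le_pow₀ hv1
    have ht1 : (1 : ℝ) ≤ t := by linarith
    have a1 : q * (t * Ac + 2 * B + Real.log (1 / δ) * B) + Ac + 1 ≤ t * (M * v ^ 4) := by
      have b1 : (2 + Real.log (1 / δ)) * B ≤ (2 * C2) * (2 + 2 * q) * v ^ 4 * t := by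
        calc (2 + Real.log (1 / δ)) * B ≤ ((2 + 2 * q) * Λ) * B := by
              gcongr
              nlinarith
          _ = (2 * C2) * (2 + 2 * q) * v ^ 4 * t := by rw [hB, hΛ]; field_simp
      set a := 2 * C + Real.log (2 * q / β)
      have b2 : Ac * t ≤ a * v ^ 4 * t := by gcongr
      have b3 : Ac ≤ Ac * t := le_mul_of_one_le_right hAc0 ht1
      have b4 : (1 : ℝ) ≤ v ^ 4 * t := one_le_mul_of_one_le_of_one_le hv4 ht1
      have b5 := mul_le_mul_of_nonneg_left b1 hq0.le
      have b6 := mul_le_mul_of_nonneg_left b2 hq0.le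
      rw [hM]
      linarith
    refine a1.trans ?_
    have e : κ * t / (v ^ 6)⁻¹ = t * (κ * v ^ 2 * v ^ 4) := by field_simp
    rw [e]
    gcongr
  · -- start
    intro i
    refine ⟨fun u hu => absurd hu (Finset.notMem_empty _), Finset.empty_subset _, Finset.Subset.rfl,
      fun u hu => absurd hu (Finset.notMem_empty _), fun u hu => absurd hu (Finset.notMem_empty _),
      by simp, Nat.ceil_pos.2 hpS, fun x hx => Nat.ceil_le.2 (hS x hx i), lt_of_lt_of_le hδ0 hQ,
      by simpa using hzc, ?_⟩
    have : Real.exp (Real.log S.card) = S.card := Real.exp_log hSpos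
    conv_rhs => rw [← this]
    refine Real.exp_le_exp.2 ?_
    have : 0 ≤ ell * (D * zc p δ ⌈p * S.card⌉₊ S) := by positivity
    simp only [Finset.card_empty, Nat.cast_zero, mul_zero, zero_div, add_zero, zero_add]
    linarith
  · have : Real.exp (Real.log S.card) = S.card := Real.exp_log hSpos
    conv_rhs => rw [← this]
    refine Real.exp_le_exp.2 ?_
    have : 0 ≤ ∑ i : Fin q, zc p δ ⌈p * S.card⌉₊ S * B :=
      Finset.sum_nonneg fun _ _ => by positivity
    simp only [Finset.card_empty, Nat.cast_zero, zero_mul, zero_add]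
    linarith

lemma book_thm (q : ℕ) (hq : 1 ≤ q) {κ : ℝ} (hκ : 0 < κ) :
    ∃ τ : ℝ, 0 < τ ∧ τ < κ ∧ τ ≤ 1 ∧ ∃ T0 : ℕ, ∀ t : ℕ, T0 ≤ t → ∀ p : ℝ, 1 / (2 * q) ≤ p → p ≤ 1 →
      ∀ {V : Type} [DecidableEq V] (c : Sym2 V → Fin q) (S : Finset V),
      (∀ x ∈ S, ∀ i, p * S.card ≤ (Nb c i x S).card) →
      Real.exp (κ * t / τ) ≤ S.card →
      HasBook c S t (S.card * p ^ t * Real.exp (-(κ * τ * t))) := by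
  obtain ⟨β, C, hβ, hβ1, hC, hgeo⟩ := geo_lemma q hq
  set l := Real.log (2 * q) with hl
  set M := (q + 1) * (2 * C + Real.log (2 * q / β)) +
      q * (2 * (Real.log (1 / β) + 2 * C)) * (2 + 2 * q) + 1 with hM
  set E := 2 + 2 * (l + 1) * (l + 10) with hE
  set v := 2 + |M| / κ + |E| / κ + 1 / κ with hv
  have p1 : 0 ≤ |M| / κ := by positivity
  have p2 : 0 ≤ |E| / κ := by positivity
  have p3 : 0 < 1 / κ := by positivity
  have hv2 : 2 ≤ v := by rw [hv]; linarith
  have hv1 : 1 ≤ v := by linarith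
  have q1 : M ≤ κ * v := by
    refine (le_abs_self M).trans ?_
    calc |M| = κ * (|M| / κ) := by field_simp
      _ ≤ κ * v := by gcongr; linarith
  have q2 : E ≤ κ * v := by
    refine (le_abs_self E).trans ?_
    calc |E| = κ * (|E| / κ) := by field_simp
      _ ≤ κ * v := by gcongr; linarith
  have q3 : 1 / κ < v := by linarith
  have hpow : ∀ n : ℕ, v ≤ v ^ (n + 1) := fun n => by
    calc v = v ^ 1 := (pow_one v).symm
      _ ≤ _ := pow_le_pow_right₀ hv1 (by omega)
  refine ⟨(v ^ 6)⁻¹, by positivity, ?_, ?_, ⌈16 * q * (v ^ 8) ^ 2⌉₊, ?_⟩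
  · rw [inv_lt_comm₀ (by positivity) hκ, inv_eq_one_div]
    exact lt_of_lt_of_le q3 (hpow 5)
  · exact inv_le_one_of_one_le₀ (hv1.trans (hpow 5))
  · intro t ht p hp hp1 V _ c S hS hSbig
    refine book_numeric hq hβ hβ1 hC hgeo hκ hl hM hv2 (q1.trans ?_) q2 (Nat.ceil_le.1 ht) hp hp1 c S hS hSbig
    gcongr
    exact hpow 1


/-- Some colour class contains a clique of the required size. -/
def Good {V : Type} {q : ℕ} (c : Sym2 V → Fin q) (S : Finset V) (k : Fin q → ℕ) : Prop :=
  ∃ i, ∃ A ⊆ S, A.card = k i ∧ MClq c i A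

lemma Good_of_zero {V : Type} {q : ℕ} (c : Sym2 V → Fin q) (S : Finset V) (k : Fin q → ℕ)
    {i : Fin q} (h : k i = 0) : Good c S k :=
  ⟨i, ∅, Finset.empty_subset _, by simp [h], fun u hu => absurd hu (Finset.notMem_empty _)⟩

lemma Good_of_book {V : Type} [DecidableEq V] {q : ℕ} {c : Sym2 V → Fin q} {S B T : Finset V}
    {k : Fin q → ℕ} {j : Fin q} (hT : T ⊆ S) (hB : B ⊆ S) (hTc : MClq c j T)
    (hTB : ∀ v ∈ T, ∀ y ∈ B, y ≠ v ∧ c s(v, y) = j) (hk : T.card ≤ k j)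
    (h : Good c B (Function.update k j (k j - T.card))) : Good c S k := by
  obtain ⟨i, A, hA, hc, hm⟩ := h
  by_cases hij : i = j
  · subst hij
    simp only [Function.update_self] at hc
    refine ⟨i, T ∪ A, Finset.union_subset hT (hA.trans hB), ?_, ?_⟩
    · rw [Finset.card_union_of_disjoint, hc]
      · omega
      · rw [Finset.disjoint_left]
        intro a ha ha'
        exact (hTB a ha a (hA ha')).1 rfl
    · intro u hu v hv huv
      rw [Finset.mem_union] at hu hv
      rcases hu with hu | hu <;> rcases hv with hv | hv
      · exact hTc u hu v hv huv
      · exact (hTB u hu v (hA hv)).2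
      · rw [Sym2.eq_swap]; exact (hTB v hv u (hA hu)).2
      · exact hm u hu v hv huv
  · rw [Function.update_of_ne hij] at hc
    exact ⟨i, A, hA.trans hB, hc, hm⟩

lemma Good_of_nb {V : Type} [DecidableEq V] {q : ℕ} {c : Sym2 V → Fin q} {S : Finset V}
    {k : Fin q → ℕ} {j : Fin q} {x : V} (hx : x ∈ S) (hk : 1 ≤ k j)
    (h : Good c (Nb c j x S) (Function.update k j (k j - 1))) : Good c S k := by
  refine Good_of_book (T := {x}) (j := j) (B := Nb c j x S) (by simpa using hx) (Finset.filter_subset _ _) ?_ ?_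
    (by simpa using hk) (by simpa using h)
  · intro u hu v hv huv
    rw [Finset.mem_singleton] at hu hv
    exact absurd (hu.trans hv.symm) huv
  · intro v hv y hy
    rw [Finset.mem_singleton] at hv
    subst hv
    exact (Finset.mem_filter.1 hy).2

lemma sum_update_pred {q : ℕ} (k : Fin q → ℕ) (j : Fin q) (m : ℕ) (h : m ≤ k j) :
    ∑ i, Function.update k j (k j - m) i + m = ∑ i, k i := by
  rw [← Finset.add_sum_erase univ _ (mem_univ j), ← Finset.add_sum_erase univ k (mem_univ j)]
  have : ∑ i ∈ univ.erase j, Function.update k j (k j - m) i = ∑ i ∈ univ.erase j, k i :=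
    Finset.sum_congr rfl fun i hi => by rw [Function.update_of_ne (Finset.mem_erase.1 hi).1]
  rw [this, Function.update_self]
  omega

lemma ES_weights {q : ℕ} (hq : 2 ≤ q) (w : Fin q → ℝ) (hw : ∀ i, 0 < w i) (hs : ∑ i, w i = 1)
    {V : Type} [DecidableEq V] (c : Sym2 V → Fin q) :
    ∀ (n : ℕ) (k : Fin q → ℕ) (S : Finset V), ∑ i, k i = n →
      2 * Real.exp (∑ i, k i * (-Real.log (w i))) - 1 ≤ S.card → Good c S k := by
  have hw1 : ∀ i, w i ≤ 1 := fun i => by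
    rw [← hs]; exact Finset.single_le_sum (fun j _ => (hw j).le) (mem_univ i)
  intro n
  induction n with
  | zero =>
    intro k S hk _
    exact Good_of_zero c S k (i := ⟨0, by omega⟩) ((Finset.sum_eq_zero_iff.1 hk) _ (mem_univ _))
  | succ n ih =>
    intro k S hk hS
    by_cases h0 : ∃ i, k i = 0
    · obtain ⟨i, hi⟩ := h0
      exact Good_of_zero c S k hi
    push Not at h0
    have hF : 1 ≤ Real.exp (∑ i, k i * (-Real.log (w i))) := by
      rw [Real.one_le_exp_iff]
      refine Finset.sum_nonneg fun i _ => ?_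
      have := Real.log_nonpos (hw i).le (hw1 i)
      have : 0 ≤ -Real.log (w i) := by linarith
      positivity
    have hSpos : (0 : ℝ) < S.card := by linarith
    obtain ⟨x, hx⟩ : S.Nonempty := Finset.card_pos.1 (by exact_mod_cast hSpos)
    obtain ⟨j, hj⟩ : ∃ j, 2 * (w j * Real.exp (∑ i, k i * (-Real.log (w i)))) - 1 ≤
        (Nb c j x S).card := by
      by_contra hcon
      push Not at hcon
      have h1 : ∑ j, ((Nb c j x S).card : ℝ) <
          ∑ j : Fin q, (2 * (w j * Real.exp (∑ i, k i * (-Real.log (w i)))) - 1) :=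
        Finset.sum_lt_sum_of_nonempty ⟨⟨0, by omega⟩, mem_univ _⟩ fun j _ => hcon j
      rw [← Nat.cast_sum, exists_big_Nb, Finset.card_erase_of_mem hx, Finset.sum_sub_distrib,
        ← Finset.mul_sum, ← Finset.sum_mul, hs] at h1
      simp only [Finset.sum_const, Finset.card_univ, Fintype.card_fin, nsmul_eq_mul] at h1
      rw [Nat.cast_sub (Finset.card_pos.2 ⟨x, hx⟩)] at h1
      have : (2 : ℝ) ≤ q := by exact_mod_cast hq
      push_cast at h1
      linarith
    have hkj : 1 ≤ k j := Nat.one_le_iff_ne_zero.2 (h0 j)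
    refine Good_of_nb (j := j) hx hkj (ih _ _ ?_ (le_trans (le_of_eq ?_) hj))
    · have := sum_update_pred k j 1 hkj
      omega
    · have : ∑ i, (Function.update k j (k j - 1) i : ℝ) * (-Real.log (w i)) =
          Real.log (w j) + ∑ i, k i * (-Real.log (w i)) := by
        rw [← Finset.add_sum_erase univ _ (mem_univ j),
          ← Finset.add_sum_erase univ (fun i => (k i : ℝ) * (-Real.log (w i))) (mem_univ j)]
        have h2 : ∑ i ∈ univ.erase j, (Function.update k j (k j - 1) i : ℝ) * (-Real.log (w i)) =
            ∑ i ∈ univ.erase j, (k i : ℝ) * (-Real.log (w i)) :=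
          Finset.sum_congr rfl fun i hi => by rw [Function.update_of_ne (Finset.mem_erase.1 hi).1]
        rw [h2, Function.update_self, Nat.cast_sub hkj]
        push_cast; ring
      rw [this, Real.exp_add, Real.exp_log (hw j)]

lemma ES_uniform {q : ℕ} (hq : 2 ≤ q) {V : Type} [DecidableEq V] (c : Sym2 V → Fin q)
    (k : Fin q → ℕ) (S : Finset V)
    (h : 2 * Real.exp ((∑ i, k i : ℕ) * Real.log q) ≤ S.card) : Good c S k := by
  have hq0 : (0 : ℝ) < q := by exact_mod_cast (by omega : 0 < q)
  refine ES_weights hq (fun _ => (q : ℝ)⁻¹) (fun _ => by positivity) ?_ c _ k S rfl ?_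
  · simp [hq0.ne']
  · simp only [Real.log_inv, neg_neg]
    rw [← Finset.sum_mul]
    push_cast at h
    linarith

lemma neg_log_one_sub_le {x : ℝ} (h0 : 0 ≤ x) (h1 : x ≤ 1 / 2) :
    -Real.log (1 - x) ≤ x + 2 * x ^ 2 := by
  have h := Real.one_sub_inv_le_log_of_pos (x := 1 - x) (by linarith)
  have : (1 - x)⁻¹ ≤ 1 + (x + 2 * x ^ 2) := by
    rw [inv_le_iff_one_le_mul₀ (by linarith)]
    nlinarith [mul_nonneg (sq_nonneg x) (by linarith : 0 ≤ 1 - 2 * x)]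
  linarith

lemma log_one_add_ge' {y : ℝ} (h0 : 0 ≤ y) : y - y ^ 2 ≤ Real.log (1 + y) := by
  have h := Real.one_sub_inv_le_log_of_pos (x := 1 + y) (by linarith)
  have : (1 + y)⁻¹ ≤ 1 - (y - y ^ 2) := by
    rw [inv_le_iff_one_le_mul₀ (by linarith)]
    nlinarith [pow_nonneg h0 3]
  linarith

lemma ES_unbalanced {q : ℕ} (hq : 2 ≤ q) {V : Type} [DecidableEq V] (c : Sym2 V → Fin q)
    (k : Fin q → ℕ) (S : Finset V) {D : ℝ} (hD : 0 < D) (hD1 : D ≤ 1) {N : ℕ} (hN : ∑ i, k i = N)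
    {j : Fin q} (hj : (k j : ℝ) ≤ (1 - D) * N / q)
    (h : 2 * Real.exp (N * Real.log q - D ^ 2 * N / (16 * q)) ≤ S.card) : Good c S k := by
  have hq2 : (2 : ℝ) ≤ q := by exact_mod_cast hq
  have hq0 : (0 : ℝ) < q := by linarith
  set x := D / 4 with hx
  set y := x / (q - 1) with hy
  have hx0 : 0 < x := by positivity
  have hx1 : x ≤ 1 / 4 := by rw [hx]; linarith
  have hq1 : (0 : ℝ) < q - 1 := by linarith
  have hy0 : 0 < y := by positivity
  have hxy : (q - 1) * y = x := by rw [hy]; field_simp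
  have hyx : y ≤ x := by nlinarith
  set w : Fin q → ℝ := fun i => if i = j then (1 - x) / q else (1 + y) / q with hw
  have hsum : ∀ f : ℝ → ℝ, ∀ a : Fin q → ℝ, ∑ i, a i * f (w i) =
      a j * f ((1 - x) / q) + (∑ i ∈ univ.erase j, a i) * f ((1 + y) / q) := by
    intro f a
    rw [← Finset.add_sum_erase univ _ (mem_univ j), Finset.sum_mul]
    congr 1
    · simp [hw]
    · exact Finset.sum_congr rfl fun i hi => by simp [hw, (Finset.mem_erase.1 hi).1]
  refine ES_weights hq w ?_ ?_ c N k S hN ?_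
  · intro i
    simp only [hw]
    split_ifs
    · have : 0 < 1 - x := by linarith
      positivity
    · positivity
  · have := hsum id (fun _ => 1)
    simp only [one_mul, id, Finset.sum_const, Finset.card_erase_of_mem (mem_univ j), Finset.card_univ,
      Fintype.card_fin, nsmul_eq_mul, mul_one] at this
    rw [this, Nat.cast_sub (by omega)]
    rw [Nat.cast_one, ← mul_div_assoc, ← add_div, div_eq_one_iff_eq hq0.ne']
    linarith
  · refine le_trans ?_ h
    have hrest : ∑ i ∈ univ.erase j, (k i : ℝ) = N - k j := by
      have : (k j : ℝ) + ∑ i ∈ univ.erase j, (k i : ℝ) = N := by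
        rw [Finset.add_sum_erase univ (fun i => (k i : ℝ)) (mem_univ j), ← hN]; push_cast; rfl
      linarith
    have e := hsum (fun z => -Real.log z) (fun i => (k i : ℝ))
    rw [hrest] at e
    have key : ∑ i, (k i : ℝ) * (-Real.log (w i)) ≤ N * Real.log q - D ^ 2 * N / (16 * q) := by
      rw [e, Real.log_div (by linarith) hq0.ne', Real.log_div (by linarith) hq0.ne']
      have l1 := neg_log_one_sub_le hx0.le (by linarith)
      have l2 := log_one_add_ge' hy0.le
      have l3 : (0:ℝ) ≤ N - k j := by
        rw [← hrest]; exact Finset.sum_nonneg fun _ _ => by positivity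
      have l4 : (0 : ℝ) ≤ k j := by positivity
      have m1 := mul_le_mul_of_nonneg_left l1 l4
      have m2 := mul_le_mul_of_nonneg_left l2 l3
      have yy : 0 ≤ y - y ^ 2 := by nlinarith
      have m3 : (k j : ℝ) * (x + 2 * x ^ 2 + (y - y ^ 2)) ≤ (1 - D) * N / q * (x + 2 * x ^ 2 + (y - y ^ 2)) := by
        gcongr
      have m4 : (1 - D) * N / q * (x + 2 * x ^ 2 + (y - y ^ 2)) - N * (y - y ^ 2) ≤ - (D ^ 2 * N / (16 * q)) := by
        have e1 : (1 - D) * N / q * (x + 2 * x ^ 2 + (y - y ^ 2)) - N * (y - y ^ 2) =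
          N / q * ((1 - D) * (x + 2 * x ^ 2 + (y - y ^ 2)) - q * (y - y ^ 2)) := by field_simp
        have e2 : - (D ^ 2 * N / (16 * q)) = N / q * (-(D ^ 2 / 16)) := by field_simp
        rw [e1, e2]
        gcongr
        have e3 : q * (y - y ^ 2) = x + y - y * x - y ^ 2 := by linear_combination (1 - y) * hxy
        rw [e3]
        have hDx : D = 4 * x := by rw [hx]; ring
        rw [hDx] at hD1 ⊢
        nlinarith [mul_nonneg hx0.le yy, mul_nonneg hx0.le (sub_nonneg.2 hyx), pow_pos hx0 3]
      nlinarith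
    linarith [Real.exp_le_exp.2 key]

lemma greedy {q : ℕ} (hq : 2 ≤ q) {V : Type} [DecidableEq V] (c : Sym2 V → Fin q) {ε : ℝ}
    (hε : 0 < ε) (hε1 : ε ≤ 1) : ∀ (M : ℕ) (S : Finset V) (k : Fin q → ℕ), (∀ i, M ≤ k i) →
      q ^ 2 / ε * (q : ℝ) ^ M ≤ S.card →
      ∃ s ≤ M, ∃ S' : Finset V, ∃ k' : Fin q → ℕ, ∑ i, k' i + s = ∑ i, k i ∧ (∀ i, k' i ≤ k i) ∧
        (∀ i, k i ≤ k' i + s) ∧ (Good c S' k' → Good c S k) ∧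
        S.card * ((1 + ε / q) / q) ^ s ≤ (S'.card : ℝ) ∧
        (s = M ∨ ∀ x ∈ S', ∀ i, (1 - ε) / q * S'.card ≤ (Nb c i x S').card) := by
  have hq2 : (2 : ℝ) ≤ q := by exact_mod_cast hq
  have hq0 : (0 : ℝ) < q := by linarith
  intro M
  induction M with
  | zero =>
    intro S k _ _
    exact ⟨0, le_rfl, S, k, rfl, fun _ => le_rfl, fun _ => le_rfl, id, by simp, Or.inl rfl⟩
  | succ M ih =>
    intro S k hk hS
    by_cases hmin : ∀ x ∈ S, ∀ i, (1 - ε) / q * S.card ≤ (Nb c i x S).card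
    · exact ⟨0, Nat.zero_le _, S, k, rfl, fun _ => le_rfl, fun _ => le_rfl, id, by simp, Or.inr hmin⟩
    push Not at hmin
    obtain ⟨x, hx, i, hi⟩ := hmin
    obtain ⟨j, hj⟩ : ∃ j, S.card * ((1 + ε / q) / q) ≤ ((Nb c j x S).card : ℝ) := by
      by_contra hcon
      push Not at hcon
      have h1 := exists_big_Nb c x S
      rw [Finset.card_erase_of_mem hx, ← Finset.add_sum_erase univ _ (mem_univ i)] at h1
      have h2 : ∑ j ∈ univ.erase i, ((Nb c j x S).card : ℝ) ≤
          ∑ j ∈ univ.erase i, S.card * ((1 + ε / q) / q) :=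
        Finset.sum_le_sum fun j _ => (hcon j).le
      simp only [Finset.sum_const, Finset.card_erase_of_mem (mem_univ i), Finset.card_univ,
        Fintype.card_fin, nsmul_eq_mul] at h2
      rw [Nat.cast_sub (by omega)] at h2
      have h3 : ((Nb c i x S).card : ℝ) + ∑ j ∈ univ.erase i, ((Nb c j x S).card : ℝ) = S.card - 1 := by
        have := congrArg (Nat.cast : ℕ → ℝ) h1
        rw [Nat.cast_sub (Finset.card_pos.2 ⟨x, hx⟩)] at this
        push_cast at this
        exact this
      have h4 : q ^ 2 / ε ≤ (S.card : ℝ) := by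
        refine le_trans (le_mul_of_one_le_right (by positivity) (one_le_pow₀ (by linarith))) hS
      rw [div_le_iff₀ hε] at h4
      have h5 : (S.card : ℝ) - 1 < (1 - ε) / q * S.card + ((q : ℝ) - (1:ℕ)) * (S.card * ((1 + ε / q) / q)) := by
        linarith
      have e : (1 - ε) / q * S.card + ((q : ℝ) - (1:ℕ)) * (S.card * ((1 + ε / q) / q)) =
          S.card - S.card * ε / q ^ 2 := by
        push_cast
        field_simp
        ring
      rw [e] at h5
      have : 1 ≤ S.card * ε / (q : ℝ) ^ 2 := by rw [le_div_iff₀ (by positivity)]; linarith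
      linarith
    have hkj : 1 ≤ k j := le_trans (by omega) (hk j)
    obtain ⟨s, hs, S', k', a1, a2, a3, a4, a5, a6⟩ := ih (Nb c j x S) (Function.update k j (k j - 1))
      (by
        intro i
        by_cases hij : i = j
        · subst hij; rw [Function.update_self]; have := hk i; omega
        · rw [Function.update_of_ne hij]; have := hk i; omega)
      (by
        refine le_trans ?_ hj
        have : (S.card : ℝ) * (1 / q) ≤ S.card * ((1 + ε / q) / q) := by
          gcongr
          have : 0 < ε / q := by positivity
          linarith
        refine le_trans ?_ this
        rw [mul_one_div, le_div_iff₀ hq0]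
        refine le_trans (le_of_eq ?_) hS
        ring)
    have hsum := sum_update_pred k j 1 hkj
    refine ⟨s + 1, by omega, S', k', by omega, ?_, ?_, fun h => Good_of_nb hx hkj (a4 h), ?_, ?_⟩
    · intro i
      refine (a2 i).trans ?_
      by_cases hij : i = j
      · subst hij; rw [Function.update_self]; omega
      · rw [Function.update_of_ne hij]
    · intro i
      have := a3 i
      by_cases hij : i = j
      · subst hij; rw [Function.update_self] at this; omega
      · rw [Function.update_of_ne hij] at this; omega
    · refine le_trans ?_ a5
      rw [pow_succ', ← mul_assoc]
      gcongr
    · rcases a6 with h | h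
      · left; omega
      · exact Or.inr h


lemma two_exp_le {a b X : ℝ} (h : 1 + a ≤ b) (hb : Real.exp b ≤ X) : 2 * Real.exp a ≤ X := by
  have h1 : (2 : ℝ) ≤ Real.exp 1 := by have := Real.add_one_le_exp (1 : ℝ); linarith
  calc 2 * Real.exp a ≤ Real.exp 1 * Real.exp a := by gcongr
    _ = Real.exp (1 + a) := (Real.exp_add _ _).symm
    _ ≤ Real.exp b := Real.exp_le_exp.2 h
    _ ≤ X := hb

set_option maxHeartbeats 4000000 in
lemma offline_core {q : ℕ} (hq : 2 ≤ q) {κ τ η ε θ lq : ℝ} {T0 : ℕ} (hκ : κ = 1 / 16384)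
    (hτ0 : 0 < τ) (hτκ : τ < κ)
    (hbook : ∀ t : ℕ, T0 ≤ t → ∀ p : ℝ, 1 / (2 * q) ≤ p → p ≤ 1 →
      ∀ {V : Type} [DecidableEq V] (c : Sym2 V → Fin q) (S : Finset V),
      (∀ x ∈ S, ∀ i, p * S.card ≤ (Nb c i x S).card) →
      Real.exp (κ * t / τ) ≤ S.card →
      HasBook c S t (S.card * p ^ t * Real.exp (-(κ * τ * t))))
    (hη : η = τ / (8 * q)) (hε : ε = κ * τ) (hθ : θ = τ ^ 2 * κ / (64 * q ^ 2))
    (hlq : lq = Real.log q)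
    {V : Type} [DecidableEq V] (c : Sym2 V → Fin q) (S : Finset V) (k : Fin q → ℕ) {N : ℕ} {K : ℝ}
    (hN : ∑ i, k i = N) (hK : (N : ℝ) = q * K) (hθK : 1 ≤ θ * K) (hT0 : T0 ≤ τ * K)
    (hG : 4 * Real.log (q ^ 2 / ε) ≤ N)
    (hS : Real.exp (N * lq - θ * K) ≤ S.card) : Good c S k := by
  have hq2 : (2 : ℝ) ≤ q := by exact_mod_cast hq
  have hq0 : (0 : ℝ) < q := by linarith
  have hκ0 : 0 < κ := by rw [hκ]; norm_num
  have hτ1 : τ ≤ 1 / 16384 := by rw [← hκ]; exact hτκ.le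
  have hη0 : 0 < η := by rw [hη]; positivity
  have hηq : η * q = τ / 8 := by rw [hη]; field_simp
  have hη1 : η ≤ τ / 16 := by nlinarith
  have hε0 : 0 < ε := by rw [hε]; positivity
  have hε1 : ε ≤ 1 / 16384 := by rw [hε, hκ]; linarith
  have hθ0 : 0 < θ := by rw [hθ]; positivity
  have hθη : θ = η ^ 2 * κ := by rw [hθ, hη]; field_simp; norm_num
  have hθη2 : θ ≤ η / 2 := by
    rw [hθη, hκ]
    nlinarith
  have hK0 : 0 < K := by
    by_contra h
    push Not at h
    nlinarith
  have f1 := mul_le_mul_of_nonneg_right hθη2 hK0.le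
  have f2 := mul_le_mul_of_nonneg_right hη1 hK0.le
  have f3 := mul_le_mul_of_nonneg_right hτ1 hK0.le
  have f4 := mul_le_mul_of_nonneg_right hq2 hK0.le
  have f5 : (η * q) * K = τ / 8 * K := by rw [hηq]
  have hηK : 2 ≤ η * K := by linarith
  have hτK : 32 ≤ τ * K := by linarith
  have hKbig : 4 ≤ K := by linarith
  have hlq2 : 1 / 2 ≤ lq := by
    rw [hlq]
    have h1 := Real.log_two_gt_d9
    have h2 := Real.log_le_log (by norm_num) hq2
    linarith
  have hlq0 : 0 < lq := by linarith
  have hN0 : (0 : ℝ) ≤ N := by positivity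
  have hθK2 : θ * K ≤ N * lq / 16 := by
    rw [hK]
    have : θ ≤ 1 / 16 := by linarith
    have g1 : 1 ≤ q * lq := by
      have := mul_le_mul hq2 hlq2 (by norm_num) hq0.le
      linarith
    have g2 := mul_le_mul_of_nonneg_right g1 hK0.le
    have g3 := mul_le_mul_of_nonneg_right this hK0.le
    linarith
  by_cases hU : ∃ i, (k i : ℝ) < (1 - η) * K
  · obtain ⟨i, hi⟩ := hU
    have e : (1 - η) * (N : ℝ) / q = (1 - η) * K := by rw [hK]; field_simp
    refine ES_unbalanced hq c k S hη0 (by linarith) hN (j := i) (by rw [e]; exact hi.le)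
      (two_exp_le ?_ hS)
    rw [← hlq]
    have e2 : η ^ 2 * (N : ℝ) / (16 * q) = η ^ 2 * K / 16 := by rw [hK]; field_simp
    rw [e2]
    have : θ * K = η ^ 2 * K / 16384 := by rw [hθη, hκ]; ring
    linarith
  push Not at hU
  have hup : ∀ i, (k i : ℝ) ≤ K + (q - 1) * η * K := by
    intro i
    have h1 : (k i : ℝ) + ∑ j ∈ univ.erase i, (k j : ℝ) = N := by
      rw [Finset.add_sum_erase univ (fun i => (k i : ℝ)) (mem_univ i), ← hN]; push_cast; rfl
    have h2 : ∑ j ∈ univ.erase i, (1 - η) * K ≤ ∑ j ∈ univ.erase i, (k j : ℝ) :=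
      Finset.sum_le_sum fun j _ => hU j
    simp only [Finset.sum_const, Finset.card_erase_of_mem (mem_univ i), Finset.card_univ,
        Fintype.card_fin, nsmul_eq_mul] at h2
    rw [Nat.cast_sub (by omega)] at h2
    push_cast at h2
    rw [hK] at h1
    linarith
  set M := ⌊η * K⌋₊ with hM
  have hMle : (M : ℝ) ≤ η * K := Nat.floor_le (by positivity)
  have hMge : η * K / 2 ≤ M := by
    have := Nat.lt_floor_add_one (η * K)
    rw [← hM] at this
    linarith
  have hlogS : N * lq - θ * K ≤ Real.log S.card :=
    (Real.le_log_iff_exp_le (lt_of_lt_of_le (Real.exp_pos _) hS)).2 hS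
  have hSpos : (0 : ℝ) < S.card := lt_of_lt_of_le (Real.exp_pos _) hS
  have hMN : (M : ℝ) * lq ≤ N * lq / 16 := by
    have : (M : ℝ) ≤ N / 16 := by
      rw [hK]
      linarith
    have := mul_le_mul_of_nonneg_right this hlq0.le
    linarith
  obtain ⟨s, hs, S', k', a1, a2, a3, a4, a5, a6⟩ := greedy hq c hε0 (by linarith) M S k
    (by
      intro i
      have : (M : ℝ) ≤ k i := by
        refine le_trans ?_ (hU i)
        linarith
      exact_mod_cast this)
    (by
      refine le_trans ?_ hS
      have e : q ^ 2 / ε * (q : ℝ) ^ M = Real.exp (Real.log (q ^ 2 / ε) + M * lq) := by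
        rw [Real.exp_add, Real.exp_log (by positivity), hlq, ← Real.log_pow, Real.exp_log (by positivity)]
      rw [e]
      refine Real.exp_le_exp.2 ?_
      have : (N : ℝ) * (1 / 2) ≤ N * lq := by gcongr
      linarith)
  refine a4 ?_
  have hsM : (s : ℝ) ≤ M := by exact_mod_cast hs
  have hq1 : (0:ℝ) < ε / q := by positivity
  have hS'pos : (0 : ℝ) < S'.card := lt_of_lt_of_le (by positivity) a5
  have hN' : (((∑ i, k' i : ℕ) : ℝ)) + s = N := by
    rw [← hN, ← a1]; push_cast; ring
  have hlog1 : ε / q / 2 ≤ Real.log (1 + ε / q) :=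
    log_one_add_ge hq1.le (by rw [div_le_one hq0]; linarith)
  have hS'exp : Real.exp (N * lq - θ * K + s * (Real.log (1 + ε / q) - lq)) ≤ S'.card := by
    refine le_trans ?_ a5
    rw [Real.exp_add]
    have e : Real.exp (s * (Real.log (1 + ε / q) - lq)) = ((1 + ε / q) / q) ^ s := by
      rw [hlq, ← Real.log_div (by linarith) hq0.ne', ← Real.log_pow, Real.exp_log (by positivity)]
    rw [e]
    gcongr
  rcases a6 with h | hdeg
  · refine ES_uniform hq c k' S' (two_exp_le ?_ hS'exp)
    rw [← hlq]
    have e : ((∑ i, k' i : ℕ) : ℝ) = N - s := by linarith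
    rw [e]
    have b1 : η * K / 2 * (ε / q / 2) ≤ s * Real.log (1 + ε / q) := by
      rw [h]; gcongr
    have b2 : η * K / 2 * (ε / q / 2) = 2 * (θ * K) := by
      rw [hη, hε, hθ]; field_simp; norm_num
    linarith
  · -- book
    have hS'exp2 : Real.exp (N * lq - θ * K - s * lq) ≤ S'.card := by
      refine le_trans (Real.exp_le_exp.2 ?_) hS'exp
      have : 0 ≤ (s : ℝ) * Real.log (1 + ε / q) := by
        have := hq1.le.trans (by linarith : ε / q ≤ 2 * Real.log (1 + ε / q))
        have : 0 ≤ Real.log (1 + ε / q) := by linarith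
        positivity
      linarith
    set t := ⌈τ * K⌉₊ with ht
    have ht1 : τ * K ≤ t := Nat.le_ceil _
    have ht2 : (t : ℝ) ≤ τ * K + 1 := (Nat.ceil_lt_add_one (by positivity)).le
    have hsle : (s : ℝ) * lq ≤ N * lq / 16 := le_trans (by gcongr) hMN
    have hKN : K ≤ N * lq := by
      have g1 := mul_le_mul hq2 hlq2 (by norm_num) hq0.le
      have g2 := mul_le_mul_of_nonneg_right g1 hK0.le
      rw [hK]; linarith
    have hp1 : 1 / (2 * (q : ℝ)) ≤ (1 - ε) / q := by
      rw [div_le_div_iff₀ (by positivity) hq0]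
      have := mul_le_mul_of_nonneg_right hε1 hq0.le
      linarith
    have hp2 : (1 - ε) / q ≤ 1 := by rw [div_le_one hq0]; linarith
    have hp0 : 0 < (1 - ε) / q := lt_of_lt_of_le (by positivity) hp1
    obtain ⟨j, A, B, hA, hB, hAt, hAc, hAB, hBc⟩ := hbook t (by exact_mod_cast hT0.trans ht1)
      ((1 - ε) / q) hp1 hp2 c S' hdeg
      (by
        refine le_trans (Real.exp_le_exp.2 ?_) hS'exp2
        have b1 : κ * t / τ ≤ 2 * κ * K := by
          rw [div_le_iff₀ hτ0]
          have := mul_le_mul_of_nonneg_left (by linarith : (t : ℝ) ≤ 2 * (τ * K)) hκ0.le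
          linarith
        have b2 : 2 * κ * K ≤ K / 8 := by rw [hκ]; linarith
        linarith)
    have hk'low : ∀ i, (1 - 2 * η) * K ≤ k' i := by
      intro i
      have h1 : (k i : ℝ) ≤ k' i + s := by exact_mod_cast a3 i
      have := hU i
      linarith
    have htk : (t : ℝ) ≤ K / 2 := by linarith
    have htk' : A.card ≤ k' j := by
      rw [hAt]
      have : (t : ℝ) ≤ k' j := by
        refine htk.trans (le_trans ?_ (hk'low j))
        linarith
      exact_mod_cast this
    refine Good_of_book hA hB hAc hAB htk' ?_
    rw [hAt] at htk' ⊢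
    have hsum := sum_update_pred k' j t htk'
    set N2 := ∑ i, Function.update k' j (k' j - t) i with hN2
    have hN2r : (N2 : ℝ) = N - s - t := by
      have : (N2 : ℝ) + t = ((∑ i, k' i : ℕ) : ℝ) := by exact_mod_cast hsum
      linarith
    have hsK : (s : ℝ) ≤ η * K := hsM.trans hMle
    have hN2half : (N : ℝ) / 2 ≤ N2 := by
      rw [hN2r, hK]
      linarith
    refine ES_unbalanced hq c _ B (D := τ / 8) (by positivity) (by linarith) hN2.symm (j := j) ?_ ?_
    · rw [Function.update_self, Nat.cast_sub htk']
      have c1 : (k' j : ℝ) ≤ K + (q - 1) * η * K := le_trans (by exact_mod_cast a2 j) (hup j)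
      have c2 : (1 - τ / 8) * (N2 : ℝ) / q = (1 - τ / 8) * (K - s / q - t / q) := by
        rw [hN2r, hK]; field_simp
      rw [c2]
      have c3 : (s : ℝ) / q ≤ η * K / 2 := by
        rw [div_le_iff₀ hq0]
        have := mul_le_mul_of_nonneg_left hq2 (mul_pos hη0 hK0).le
        linarith
      have c4 : (t : ℝ) / q ≤ t / 2 := by
        gcongr
      have c5 : 0 ≤ (s : ℝ) / q + t / q := by positivity
      have c6 : (q - 1) * η * K = τ * K / 8 - η * K := by
        have : (q - 1) * η * K = (η * q) * K - η * K := by ring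
        rw [this, hηq]; ring
      have c7 : 0 ≤ τ / 8 * ((s : ℝ) / q + t / q) := by positivity
      have c8 := mul_pos hη0 hK0
      linarith
    · have hBexp : Real.exp (N * lq - θ * K - s * lq + t * (Real.log (1 - ε) - lq) + -(κ * τ * t)) ≤
          B.card := by
        refine le_trans ?_ hBc
        rw [Real.exp_add, Real.exp_add]
        have e : Real.exp (t * (Real.log (1 - ε) - lq)) = ((1 - ε) / q) ^ t := by
          rw [hlq, ← Real.log_div (by linarith) hq0.ne', ← Real.log_pow, Real.exp_log (by positivity)]
        rw [e]
        gcongr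
      refine two_exp_le ?_ hBexp
      rw [← hlq]
      have d1 : -Real.log (1 - ε) ≤ 2 * ε := by
        have := neg_log_one_sub_le hε0.le (by linarith)
        have : ε ^ 2 ≤ 1 / 16384 * ε := by rw [sq]; gcongr
        linarith
      have d2 : (τ / 8) ^ 2 * (N : ℝ) / 2 / (16 * q) ≤ (τ / 8) ^ 2 * N2 / (16 * q) := by
        rw [mul_div_assoc]
        gcongr
      have d3 : (τ / 8) ^ 2 * (N : ℝ) / 2 / (16 * q) = τ ^ 2 * K / 2048 := by
        rw [hK]; field_simp; norm_num
      have ht3 : (t : ℝ) ≤ 2 * (τ * K) := by linarith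
      have d4 : t * (-Real.log (1 - ε)) ≤ 2 * (τ * K) * (2 * ε) := by
        calc t * (-Real.log (1 - ε)) ≤ t * (2 * ε) := by gcongr
          _ ≤ _ := by gcongr
      have d5 : κ * τ * t ≤ κ * τ * (2 * (τ * K)) := by gcongr
      have d6 : 2 * (τ * K) * (2 * ε) = τ ^ 2 * K / 4096 := by rw [hε, hκ]; ring
      have d7 : κ * τ * (2 * (τ * K)) = τ ^ 2 * K / 8192 := by rw [hκ]; ring
      have d8 : θ * K ≤ τ ^ 2 * K / 16384 := by
        rw [mul_div_right_comm]
        refine mul_le_mul_of_nonneg_right ?_ hK0.le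
        rw [hθη, hκ]
        have : η ^ 2 ≤ τ ^ 2 := by gcongr; linarith
        linarith
      rw [hN2r]
      rw [hN2r] at d2
      linarith

theorem main_offline (q : ℕ) (hq : 2 ≤ q) : ∃ δ : ℝ, 0 < δ ∧ δ ≤ 1 / 4 ∧ ∃ N0 : ℕ,
    ∀ {V : Type} [DecidableEq V] (c : Sym2 V → Fin q) (S : Finset V) (k : Fin q → ℕ),
      N0 ≤ ∑ i, k i → Real.exp ((1 - δ) * ((∑ i, k i : ℕ) * Real.log q)) ≤ S.card → Good c S k := by
  obtain ⟨τ, hτ0, hτκ, hτ1, T0, hbook⟩ := book_thm q (by omega) (κ := 1 / 16384) (by norm_num)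
  have hq2 : (2 : ℝ) ≤ q := by exact_mod_cast hq
  have hq0 : (0 : ℝ) < q := by linarith
  have hlq2 : 1 / 2 ≤ Real.log q := by
    have h1 := Real.log_two_gt_d9
    have h2 := Real.log_le_log (by norm_num) hq2
    linarith
  set θ := τ ^ 2 * (1 / 16384) / (64 * (q : ℝ) ^ 2) with hθ
  have hθ0 : 0 < θ := by positivity
  have hθ1 : θ ≤ 1 / 4 := by
    rw [hθ, div_le_iff₀ (by positivity)]
    nlinarith
  have hqlq : 1 ≤ q * Real.log q := by nlinarith
  set ε := 1 / 16384 * τ with hε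
  refine ⟨θ / (q * Real.log q), by positivity, (div_le_self hθ0.le hqlq).trans hθ1,
    ⌈q * (1 / θ) + q * (T0 / τ) + |4 * Real.log (q ^ 2 / ε)|⌉₊, ?_⟩
  intro V _ c S k hN hS
  have hN1 := Nat.ceil_le.1 hN
  set N := ∑ i, k i with hNdef
  have p1 : 0 ≤ q * (1 / θ) := by positivity
  have p2 : 0 ≤ q * (T0 / τ) := by positivity
  have p3 := abs_nonneg (4 * Real.log (q ^ 2 / ε))
  have p4 := le_abs_self (4 * Real.log (q ^ 2 / ε))
  have hK : (N : ℝ) = q * (N / q) := by field_simp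
  refine offline_core hq rfl hτ0 hτκ hbook rfl hε hθ rfl c S k hNdef.symm hK ?_ ?_ (by linarith) ?_
  · have : 1 / θ ≤ N / q := by rw [le_div_iff₀ hq0]; linarith
    calc (1 : ℝ) = θ * (1 / θ) := by field_simp
      _ ≤ _ := by gcongr
  · have : T0 / τ ≤ N / q := by rw [le_div_iff₀ hq0]; linarith
    calc (T0 : ℝ) = τ * (T0 / τ) := by field_simp
      _ ≤ _ := by gcongr
  · refine le_trans (Real.exp_le_exp.2 (le_of_eq ?_)) hS
    have : Real.log q ≠ 0 := by linarith
    field_simp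


/-- Builder can force `W` within `n` further rounds. -/
def Force {q : ℕ} (W : History q → Prop) : ℕ → History q → Prop
  | 0, h => W h
  | n + 1, h => W h ∨ ∃ e : Sym2 ℕ, ¬ e.IsDiag ∧ e ∉ h.map Prod.fst ∧
      ∀ i : Fin q, Force W n (h ++ [(e, i)])

lemma Force_of_win {q : ℕ} {W : History q → Prop} {h : History q} (n : ℕ) (hw : W h) :
    Force W n h := by
  cases n with
  | zero => exact hw
  | succ n => exact Or.inl hw

lemma exists_fresh {q : ℕ} (h : History q) : ∃ e : Sym2 ℕ, ¬ e.IsDiag ∧ e ∉ h.map Prod.fst := by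
  by_contra hcon
  push Not at hcon
  have hinj : Function.Injective (fun k : ℕ => s(0, k + 1)) := by
    intro a b hab
    simpa using hab
  have hinf := Set.infinite_of_injective_forall_mem (s := {e | e ∈ h.map Prod.fst}) hinj
    (fun k => hcon _ (by simp))
  exact hinf (List.finite_toSet _)

lemma Force_strategy {q : ℕ} (W : History q → Prop) :
    ∃ B : History q → Sym2 ℕ, validBuilder B ∧ ∀ (P : History q → Sym2 ℕ → Fin q) (N n0 : ℕ),
      Force W N (play B P n0) → ∃ n ≤ n0 + N, W (play B P n) := by
  classical
  have key : ∀ h : History q, ∃ e : Sym2 ℕ, (¬ e.IsDiag ∧ e ∉ h.map Prod.fst) ∧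
      ∀ n, Force W n h → W h ∨ ∀ i, ∃ m, m + 1 ≤ n ∧ Force W m (h ++ [(e, i)]) := by
    intro h
    by_cases hx : ∃ n, Force W n h
    · have h1 := Nat.find_spec hx
      obtain ⟨n0, hn0⟩ : ∃ n0, n0 = Nat.find hx := ⟨_, rfl⟩
      rw [← hn0] at h1
      have hmin : ∀ n, Force W n h → n0 ≤ n := fun n hn => by rw [hn0]; exact Nat.find_min' hx hn
      cases n0 with
      | zero =>
        obtain ⟨e, he⟩ := exists_fresh h
        exact ⟨e, he, fun n _ => Or.inl h1⟩
      | succ m =>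
        rcases h1 with h1 | ⟨e, he1, he2, he3⟩
        · obtain ⟨e, he⟩ := exists_fresh h
          exact ⟨e, he, fun n _ => Or.inl h1⟩
        · exact ⟨e, ⟨he1, he2⟩, fun n hn => Or.inr fun i => ⟨m, hmin n hn, he3 i⟩⟩
    · obtain ⟨e, he⟩ := exists_fresh h
      exact ⟨e, he, fun n hn => absurd ⟨n, hn⟩ hx⟩
  choose B hB1 hB2 using key
  refine ⟨B, hB1, fun P N => ?_⟩
  induction N using Nat.strong_induction_on with
  | _ N ih =>
    intro n0 hF
    rcases hB2 _ N hF with h | h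
    · exact ⟨n0, Nat.le_add_right _ _, h⟩
    · obtain ⟨m, hm, hF'⟩ := h (P (play B P n0) (B (play B P n0)))
      obtain ⟨n, hn, hW⟩ := ih m (by omega) (n0 + 1) hF'
      exact ⟨n, by omega, hW⟩

lemma onlineRamsey_le_of_Force {V : Type} {q : ℕ} (G : SimpleGraph V) {N : ℕ}
    (h : Force (fun h : History q => ∃ i, containsCopy G (colourGraph h i)) N []) :
    onlineRamsey q G ≤ N := by
  obtain ⟨B, hB, hP⟩ := Force_strategy (fun h : History q => ∃ i, containsCopy G (colourGraph h i))
  refine Nat.sInf_le ⟨B, hB, fun P => ?_⟩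
  obtain ⟨n, hn, hW⟩ := hP P N 0 h
  exact ⟨n, by omega, hW⟩

lemma Force_expose {q : ℕ} {W : History q → Prop} {n : ℕ} : ∀ (E : List (Sym2 ℕ)) (h : History q),
    E.Nodup → (∀ e ∈ E, ¬ e.IsDiag ∧ e ∉ h.map Prod.fst) →
    (∀ h' : History q, h ⊆ h' → (∀ e ∈ h'.map Prod.fst, e ∈ h.map Prod.fst ∨ e ∈ E) →
      (∀ e ∈ E, ∃ i, (e, i) ∈ h') → Force W n h') → Force W (n + E.length) h := by
  intro E
  induction E with
  | nil =>
    intro h _ _ H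
    exact H h (fun _ => id) (fun e he => Or.inl he) (by simp)
  | cons e E ih =>
    intro h hnd hE H
    rw [List.nodup_cons] at hnd
    refine Or.inr ⟨e, (hE e (by simp)).1, (hE e (by simp)).2, fun i => ?_⟩
    refine ih (h ++ [(e, i)]) hnd.2 ?_ ?_
    · intro e' he'
      refine ⟨(hE e' (by simp [he'])).1, ?_⟩
      have := (hE e' (by simp [he'])).2
      rw [List.map_append, List.mem_append]
      rintro (h1 | h1)
      · exact this h1
      · simp only [List.map_cons, List.map_nil, List.mem_singleton] at h1
        subst h1
        exact hnd.1 he'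
    · intro h' hsub hfst hcol
      refine H h' (fun a ha => hsub (List.mem_append_left _ ha)) ?_ ?_
      · intro e' he'
        rcases hfst e' he' with h1 | h1
        · rw [List.map_append, List.mem_append] at h1
          rcases h1 with h1 | h1
          · exact Or.inl h1
          · simp only [List.map_cons, List.map_nil, List.mem_singleton] at h1
            right; simp [h1]
        · right; simp [h1]
      · intro e' he'
        rcases List.mem_cons.1 he' with rfl | he'
        · exact ⟨i, hsub (by simp)⟩
        · exact hcol e' he'

def Pre {q : ℕ} (W : History q → Prop) (h : History q) (S : Finset ℕ) (k : Fin q → ℕ) : Prop :=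
  ∀ h' : History q, h ⊆ h' → ∀ i, ∀ A ⊆ S, A.card = k i →
    (∀ u ∈ A, ∀ v ∈ A, u ≠ v → (s(u, v), i) ∈ h') → W h'

def Fr {q : ℕ} (h : History q) (S : Finset ℕ) : Prop :=
  ∀ u ∈ S, ∀ v ∈ S, u ≠ v → s(u, v) ∉ h.map Prod.fst

/-- Number of vertices required for `s` star steps. -/
def nn (q R : ℕ) : ℕ → ℕ
  | 0 => R
  | s + 1 => q * (nn q R s - 1) + 2

/-- Cost of `s` star steps. -/
def cc (q R c0 : ℕ) : ℕ → ℕ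
  | 0 => c0
  | s + 1 => cc q R c0 s + (nn q R (s + 1) - 1)

lemma Pre_zero {q : ℕ} {W : History q → Prop} {h : History q} {S : Finset ℕ} {k : Fin q → ℕ}
    (hP : Pre W h S k) {i : Fin q} (hi : k i = 0) : W h :=
  hP h (fun _ => id) i ∅ (Finset.empty_subset _) (by simp [hi]) (by simp)

lemma star_step {q : ℕ} (hq : 1 ≤ q) {W : History q → Prop} {R c0 m0 : ℕ} (hR : 1 ≤ R)
    (Hterm : ∀ (h : History q) (S : Finset ℕ) (k : Fin q → ℕ), Fr h S → Pre W h S k → S.card = R →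
      ∑ i, k i = m0 → Force W c0 h) :
    ∀ (s : ℕ) (h : History q) (S : Finset ℕ) (k : Fin q → ℕ), Fr h S → Pre W h S k →
      S.card = nn q R s → ∑ i, k i = m0 + s → Force W (cc q R c0 s) h := by
  classical
  intro s
  induction s with
  | zero => intro h S k h1 h2 h3 h4; exact Hterm h S k h1 h2 h3 h4
  | succ s ih =>
    intro h S k hFr hPre hS hk
    have hnn : 1 ≤ nn q R s := by cases s <;> simp [nn] <;> omega
    by_cases h0 : ∃ i, k i = 0
    · obtain ⟨i, hi⟩ := h0
      exact Force_of_win _ (Pre_zero hPre hi)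
    push Not at h0
    obtain ⟨x, hx⟩ : S.Nonempty := Finset.card_pos.1 (by rw [hS]; simp [nn])
    have hinj : Function.Injective (fun y : ℕ => s(x, y)) := by
      intro a b hab
      have hab2 : a = b ∨ x = b ∧ a = x := by simpa using hab
      rcases hab2 with h | ⟨h1, h2⟩
      · exact h
      · exact h2.trans h1
    set E : List (Sym2 ℕ) := (S.erase x).toList.map (fun y => s(x, y)) with hE
    have hElen : E.length = nn q R (s + 1) - 1 := by
      rw [hE, List.length_map, Finset.length_toList, Finset.card_erase_of_mem hx, hS]
    have hEmem : ∀ e, e ∈ E ↔ ∃ y ∈ S, y ≠ x ∧ s(x, y) = e := by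
      intro e
      simp only [hE, List.mem_map, Finset.mem_toList, Finset.mem_erase]
      constructor
      · rintro ⟨y, ⟨a, b⟩, c⟩; exact ⟨y, b, a, c⟩
      · rintro ⟨y, b, a, c⟩; exact ⟨y, ⟨a, b⟩, c⟩
    show Force W (cc q R c0 s + (nn q R (s + 1) - 1)) h
    rw [← hElen]
    refine Force_expose E h ((List.nodup_map_iff hinj).2 (Finset.nodup_toList _)) ?_ ?_
    · intro e he
      obtain ⟨y, hy, hyx, rfl⟩ := (hEmem e).1 he
      exact ⟨by simpa using hyx.symm, hFr x hx y hy hyx.symm⟩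
    · intro h' hsub hfst hcol
      have hcol' : ∀ y, ∃ i, y ∈ S.erase x → (s(x, y), i) ∈ h' := by
        intro y
        by_cases hy : y ∈ S.erase x
        · obtain ⟨i, hi⟩ := hcol s(x, y) ((hEmem _).2
            ⟨y, (Finset.mem_erase.1 hy).2, (Finset.mem_erase.1 hy).1, rfl⟩)
          exact ⟨i, fun _ => hi⟩
        · exact ⟨⟨0, hq⟩, fun h => absurd h hy⟩
      choose g hg using hcol'
      obtain ⟨j, hj⟩ : ∃ j, nn q R s ≤ ((S.erase x).filter fun y => g y = j).card := by
        by_contra hcon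
        push Not at hcon
        have h1 : (S.erase x).card = ∑ j : Fin q, ((S.erase x).filter fun y => g y = j).card :=
          Finset.card_eq_sum_card_fiberwise (t := univ) (fun _ _ => Finset.mem_coe.2 (mem_univ _))
        have h2 : ∑ j : Fin q, ((S.erase x).filter fun y => g y = j).card ≤
            ∑ j : Fin q, (nn q R s - 1) :=
          Finset.sum_le_sum fun j _ => by have := hcon j; omega
        simp only [Finset.sum_const, Finset.card_univ, Fintype.card_fin, smul_eq_mul] at h2
        rw [Finset.card_erase_of_mem hx, hS] at h1
        simp only [nn] at h1
        omega
      obtain ⟨S1, hS1, hS1c⟩ := Finset.exists_subset_card_eq hj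
      have hmem : ∀ y ∈ S1, y ∈ S ∧ y ≠ x ∧ (s(x, y), j) ∈ h' := by
        intro y hy
        obtain ⟨a, b⟩ := Finset.mem_filter.1 (hS1 hy)
        have := hg y a
        rw [b] at this
        exact ⟨(Finset.mem_erase.1 a).2, (Finset.mem_erase.1 a).1, this⟩
      have hkj : 1 ≤ k j := Nat.one_le_iff_ne_zero.2 (h0 j)
      refine ih h' S1 (Function.update k j (k j - 1)) ?_ ?_ hS1c ?_
      · intro u hu v hv huv hmem'
        rcases hfst _ hmem' with h1 | h1
        · exact hFr u (hmem u hu).1 v (hmem v hv).1 huv h1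
        · obtain ⟨y, _, _, hy⟩ := (hEmem _).1 h1
          rw [Sym2.eq_iff] at hy
          rcases hy with ⟨a, _⟩ | ⟨a, _⟩
          · exact (hmem u hu).2.1 a.symm
          · exact (hmem v hv).2.1 a.symm
      · intro h'' hsub' i A hA hAc hclq
        by_cases hij : i = j
        · subst hij
          rw [Function.update_self] at hAc
          have hxA : x ∉ A := fun hxA => (hmem x (hA hxA)).2.1 rfl
          refine hPre h'' (fun a ha => hsub' (hsub ha)) i (insert x A) ?_ ?_ ?_
          · intro a ha
            rcases Finset.mem_insert.1 ha with rfl | ha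
            · exact hx
            · exact (hmem a (hA ha)).1
          · rw [Finset.card_insert_of_notMem hxA, hAc]; omega
          · intro u hu v hv huv
            rcases Finset.mem_insert.1 hu with hu2 | hu2
            · rcases Finset.mem_insert.1 hv with hv2 | hv2
              · exact absurd (hu2.trans hv2.symm) huv
              · rw [hu2]; exact hsub' (hmem v (hA hv2)).2.2
            · rcases Finset.mem_insert.1 hv with hv2 | hv2
              · rw [hv2, Sym2.eq_swap]; exact hsub' (hmem u (hA hu2)).2.2
              · exact hclq u hu2 v hv2 huv
        · rw [Function.update_of_ne hij] at hAc
          exact hPre h'' (fun a ha => hsub' (hsub ha)) i A (fun a ha => (hmem a (hA ha)).1) hAc hclq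
      · have := sum_update_pred k j 1 hkj
        omega

lemma nn_le {q : ℕ} (hq : 2 ≤ q) {R : ℕ} (hR : 1 ≤ R) (s : ℕ) : nn q R s ≤ q ^ s * R := by
  induction s with
  | zero => simp [nn]
  | succ s ih =>
    have hnn : 1 ≤ nn q R s := by cases s <;> simp [nn] <;> omega
    obtain ⟨m, hm⟩ : ∃ m, nn q R s = m + 1 := ⟨nn q R s - 1, by omega⟩
    simp only [nn]
    calc q * (nn q R s - 1) + 2 ≤ q * nn q R s := by
          rw [hm, Nat.add_sub_cancel, Nat.mul_succ]; omega
      _ ≤ q * (q ^ s * R) := Nat.mul_le_mul_left _ ih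
      _ = q ^ (s + 1) * R := by ring

lemma cc_le {q : ℕ} (hq : 2 ≤ q) {R : ℕ} (hR : 1 ≤ R) (c0 s : ℕ) :
    cc q R c0 s ≤ c0 + q ^ (s + 1) * R := by
  induction s with
  | zero => simp [cc]
  | succ s ih =>
    have h1 := nn_le hq hR (s + 1)
    simp only [cc]
    have h2 : 2 * (q ^ (s + 1) * R) ≤ q ^ (s + 1 + 1) * R := by
      calc 2 * (q ^ (s + 1) * R) ≤ q * (q ^ (s + 1) * R) := Nat.mul_le_mul_right _ hq
        _ = _ := by ring
    omega

lemma Pre_init {q t : ℕ} (S : Finset ℕ) :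
    Pre (fun h : History q => ∃ i, containsCopy (⊤ : SimpleGraph (Fin t)) (colourGraph h i)) [] S
      (fun _ => t) := by
  intro h' _ i A _ hAc hclq
  refine ⟨i, fun a => A.orderEmbOfFin hAc a, (A.orderEmbOfFin hAc).injective, ?_⟩
  intro u v huv
  rw [colourGraph, SimpleGraph.fromEdgeSet_adj]
  have hne : A.orderEmbOfFin hAc u ≠ A.orderEmbOfFin hAc v :=
    fun h => huv.ne ((A.orderEmbOfFin hAc).injective h)
  exact ⟨hclq _ (A.orderEmbOfFin_mem hAc u) _ (A.orderEmbOfFin_mem hAc v) hne, hne⟩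

lemma online_bound {q t : ℕ} (hq : 2 ≤ q) {R c0 m0 s : ℕ} (hR : 1 ≤ R) (hs : q * t = m0 + s)
    (Hterm : ∀ (h : History q) (S : Finset ℕ) (k : Fin q → ℕ), Fr h S →
      Pre (fun h : History q => ∃ i, containsCopy (⊤ : SimpleGraph (Fin t)) (colourGraph h i)) h S k →
      S.card = R → ∑ i, k i = m0 →
      Force (fun h : History q => ∃ i, containsCopy (⊤ : SimpleGraph (Fin t)) (colourGraph h i)) c0 h) :
    onlineRamsey q (⊤ : SimpleGraph (Fin t)) ≤ c0 + q ^ (s + 1) * R := by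
  refine (onlineRamsey_le_of_Force _ ?_).trans (cc_le hq hR c0 s)
  refine star_step (by omega) hR Hterm s [] (range (nn q R s)) (fun _ => t) ?_ (Pre_init _) (by simp) ?_
  · intro u _ v _ _; simp
  · simp [hs]

lemma online_simple {q t : ℕ} (hq : 2 ≤ q) (ht : 1 ≤ t) :
    onlineRamsey q (⊤ : SimpleGraph (Fin t)) ≤ q ^ (q * (t - 1)) := by
  rcases Nat.lt_or_ge t 2 with h1 | h2
  · have : t = 1 := by omega
    subst this
    refine (onlineRamsey_le_of_Force (N := 0) _ ?_).trans (Nat.zero_le _)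
    refine ⟨⟨0, by omega⟩, fun _ => 0, Function.injective_of_subsingleton _, ?_⟩
    intro u v huv
    exact absurd (Subsingleton.elim u v) huv.ne
  · obtain ⟨r, rfl⟩ : ∃ r, t = r + 2 := ⟨t - 2, by omega⟩
    have := online_bound (t := r + 2) hq (R := 1) (c0 := 0) (m0 := 2 * q - 1) (s := q * r + 1) le_rfl
      (by
        have : q * (r + 2) = q * r + 2 * q := by ring
        omega)
      (by
        intro h S k hFr hPre hS hk
        obtain ⟨i, hi⟩ : ∃ i, k i ≤ 1 := by
          by_contra hcon
          push Not at hcon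
          have : ∑ i : Fin q, 2 ≤ ∑ i, k i := Finset.sum_le_sum fun i _ => hcon i
          simp at this
          omega
        rcases Nat.lt_or_ge (k i) 1 with h0 | h0
        · exact Pre_zero hPre (i := i) (by omega)
        · obtain ⟨x, rfl⟩ := Finset.card_eq_one.1 hS
          refine hPre h (fun _ => id) i {x} Finset.Subset.rfl (by simp; omega) ?_
          intro u hu v hv huv
          rw [Finset.mem_singleton] at hu hv
          exact absurd (hu.trans hv.symm) huv)
    refine this.trans ?_
    rw [zero_add, mul_one]
    refine Nat.pow_le_pow_right (by omega) ?_
    have : q * (r + 2 - 1) = q * r + q := by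
      rw [show r + 2 - 1 = r + 1 by omega]; ring
    omega

lemma online_offline {q t : ℕ} (hq : 2 ≤ q) {R m0 s : ℕ} (hR : 1 ≤ R) (hs : q * t = m0 + s)
    (Hoff : ∀ (c : Sym2 ℕ → Fin q) (S : Finset ℕ) (k : Fin q → ℕ), ∑ i, k i = m0 → S.card = R →
      Good c S k) :
    onlineRamsey q (⊤ : SimpleGraph (Fin t)) ≤ R ^ 2 + q ^ (s + 1) * R := by
  classical
  refine online_bound hq hR hs ?_
  intro h S k hFr hPre hS hk
  set E : List (Sym2 ℕ) := (S.offDiag.image (fun p => s(p.1, p.2))).toList with hE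
  have hEmem : ∀ e, e ∈ E ↔ ∃ u ∈ S, ∃ v ∈ S, u ≠ v ∧ s(u, v) = e := by
    intro e
    simp only [hE, Finset.mem_toList, Finset.mem_image, Finset.mem_offDiag, Prod.exists]
    constructor
    · rintro ⟨a, b, ⟨x, y, z⟩, w⟩; exact ⟨a, x, b, y, z, w⟩
    · rintro ⟨a, x, b, y, z, w⟩; exact ⟨a, b, ⟨x, y, z⟩, w⟩
  have hlen : E.length ≤ R ^ 2 := by
    rw [hE, Finset.length_toList]
    refine Finset.card_image_le.trans ?_
    rw [Finset.offDiag_card, hS, sq]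
    omega
  have hF := Force_expose (n := R ^ 2 - E.length)
    (W := (fun h : History q => ∃ i, containsCopy (⊤ : SimpleGraph (Fin t)) (colourGraph h i)))
    E h (Finset.nodup_toList _) ?_ ?_
  · rwa [Nat.sub_add_cancel hlen] at hF
  · intro e he
    obtain ⟨u, hu, v, hv, huv, rfl⟩ := (hEmem e).1 he
    exact ⟨by simpa using huv, hFr u hu v hv huv⟩
  · intro h' hsub hfst hcol
    have hcol' : ∀ e, ∃ i, e ∈ E → (e, i) ∈ h' := by
      intro e
      by_cases he : e ∈ E
      · obtain ⟨i, hi⟩ := hcol e he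
        exact ⟨i, fun _ => hi⟩
      · exact ⟨⟨0, by omega⟩, fun h => absurd h he⟩
    choose c hc using hcol'
    obtain ⟨i, A, hA, hAc, hm⟩ := Hoff c S k hk hS
    refine Force_of_win _ (hPre h' hsub i A hA hAc ?_)
    intro u hu v hv huv
    have := hc s(u, v) ((hEmem _).2 ⟨u, hA hu, v, hA hv, huv, rfl⟩)
    rwa [hm u hu v hv huv] at this

lemma online_exp (q : ℕ) (hq : 2 ≤ q) : ∃ δ : ℝ, 0 < δ ∧ ∃ T0 : ℕ, ∀ t : ℕ, T0 ≤ t →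
    (onlineRamsey q (⊤ : SimpleGraph (Fin t)) : ℝ) ≤ Real.exp ((1 - δ) * (q * t * Real.log q)) := by
  obtain ⟨δ, hδ0, hδ1, N0, H⟩ := main_offline q hq
  have hq2 : (2 : ℝ) ≤ q := by exact_mod_cast hq
  have hq0 : (0 : ℝ) < q := by linarith
  have hlq0 : 0 < Real.log q := Real.log_pos (by linarith)
  refine ⟨δ / 8, by positivity, 2 * N0 + 4 + ⌈Real.log (4 + 2 * q) / (δ / 8 * (q * Real.log q))⌉₊, ?_⟩
  intro t ht
  set lq := Real.log q with hlq
  set m0 := q * (t / 2) with hm0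
  have hm0N : N0 ≤ m0 := by
    calc N0 ≤ 1 * (t / 2) := by omega
      _ ≤ _ := Nat.mul_le_mul_right _ (by omega)
  have hm0le : m0 ≤ q * t := Nat.mul_le_mul_left _ (Nat.div_le_self _ _)
  set R := ⌈Real.exp ((1 - δ) * (m0 * lq))⌉₊ with hRdef
  have hRge : Real.exp ((1 - δ) * (m0 * lq)) ≤ R := Nat.le_ceil _
  have hR1 : 1 ≤ R := Nat.ceil_pos.2 (Real.exp_pos _)
  have hexp1 : 1 ≤ Real.exp ((1 - δ) * (m0 * lq)) := by
    rw [Real.one_le_exp_iff]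
    have : 0 ≤ 1 - δ := by linarith
    positivity
  have hRle : (R : ℝ) ≤ 2 * Real.exp ((1 - δ) * (m0 * lq)) := by
    have := (Nat.ceil_lt_add_one (Real.exp_pos ((1 - δ) * (m0 * lq))).le).le
    rw [← hRdef] at this
    linarith
  have hmain := online_offline (t := t) hq (R := R) (m0 := m0) (s := q * t - m0) hR1 (by omega)
    (by
      intro c S k hk hS
      refine H c S k (by rw [hk]; exact hm0N) ?_
      rw [hk, hS]
      exact hRge)
  have hmain' : (onlineRamsey q (⊤ : SimpleGraph (Fin t)) : ℝ) ≤
      (R : ℝ) ^ 2 + (q : ℝ) ^ (q * t - m0 + 1) * R := by exact_mod_cast hmain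
  refine hmain'.trans ?_
  have hsr : (((q * t - m0 : ℕ) : ℝ)) = q * t - m0 := by
    rw [Nat.cast_sub hm0le]; push_cast; ring
  have hm2 : 2 * (m0 : ℝ) ≤ q * t := by
    have : 2 * m0 ≤ q * t := by
      rw [hm0]
      calc 2 * (q * (t / 2)) = q * (2 * (t / 2)) := by ring
        _ ≤ q * t := Nat.mul_le_mul_left _ (by omega)
    exact_mod_cast this
  have hm4 : (q : ℝ) * t / 4 ≤ m0 := by
    have : q * t ≤ 4 * m0 := by
      rw [hm0]
      calc q * t ≤ q * (4 * (t / 2)) := Nat.mul_le_mul_left _ (by omega)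
        _ = _ := by ring
    have : (q : ℝ) * t ≤ 4 * m0 := by exact_mod_cast this
    linarith
  have ht' : Real.log (4 + 2 * q) / (δ / 8 * (q * lq)) ≤ t := by
    refine (Nat.le_ceil _).trans ?_
    exact_mod_cast (by omega : ⌈Real.log (4 + 2 * q) / (δ / 8 * (q * lq))⌉₊ ≤ t)
  rw [div_le_iff₀ (by positivity)] at ht'
  have e1 : (R : ℝ) ^ 2 ≤ 4 * Real.exp ((1 - δ / 4) * (q * t * lq)) := by
    calc (R : ℝ) ^ 2 ≤ (2 * Real.exp ((1 - δ) * (m0 * lq))) ^ 2 := by gcongr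
      _ = 4 * Real.exp (2 * ((1 - δ) * (m0 * lq))) := by
          rw [mul_pow, ← Real.exp_nat_mul]; norm_num
      _ ≤ _ := by
          gcongr ?_ * Real.exp ?_
          calc 2 * ((1 - δ) * (m0 * lq)) = (1 - δ) * (2 * m0 * lq) := by ring
            _ ≤ (1 - δ / 4) * (q * t * lq) := by
                have : 0 ≤ 1 - δ / 4 := by linarith
                gcongr
                linarith
  have e2 : (q : ℝ) ^ (q * t - m0 + 1) * R ≤ 2 * q * Real.exp ((1 - δ / 4) * (q * t * lq)) := by
    have e3 : (q : ℝ) ^ (q * t - m0) = Real.exp ((q * t - m0) * lq) := by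
      rw [← hsr, hlq, ← Real.log_pow, Real.exp_log (by positivity)]
    calc (q : ℝ) ^ (q * t - m0 + 1) * R ≤
        (q : ℝ) ^ (q * t - m0 + 1) * (2 * Real.exp ((1 - δ) * (m0 * lq))) := by gcongr
      _ = 2 * q * Real.exp ((q * t - m0) * lq + (1 - δ) * (m0 * lq)) := by
          rw [pow_succ, e3, Real.exp_add]; ring
      _ ≤ _ := by
          gcongr ?_ * Real.exp ?_
          have : δ * lq * (q * t / 4) ≤ δ * lq * m0 := by gcongr
          linarith
  have e4 : (4 + 2 * q) * Real.exp ((1 - δ / 4) * (q * t * lq)) ≤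
      Real.exp ((1 - δ / 8) * (q * t * lq)) := by
    have : (4 + 2 * (q : ℝ)) = Real.exp (Real.log (4 + 2 * q)) := by
      rw [Real.exp_log (by positivity)]
    rw [this, ← Real.exp_add]
    refine Real.exp_le_exp.2 ?_
    linarith
  linarith

lemma ramseyQ_const_pos {q : ℕ} (hq : 2 ≤ q) {m : ℕ} (hm : 1 ≤ m) :
    1 ≤ ramseyQ (fun _ : Fin q => m) := by
  have hne : {n : ℕ | ∀ c : Sym2 (Fin n) → Fin q, ∃ i : Fin q, monoClique c i m}.Nonempty := by
    refine ⟨⌈2 * Real.exp ((∑ _i : Fin q, m : ℕ) * Real.log q)⌉₊, fun c => ?_⟩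
    obtain ⟨i, A, _, hAc, hm⟩ := ES_uniform hq c (fun _ => m) univ
      (by rw [Finset.card_univ, Fintype.card_fin]; exact Nat.le_ceil _)
    exact ⟨i, A, hAc, hm⟩
  by_contra hcon
  have h0 : ramseyQ (fun _ : Fin q => m) = 0 := by omega
  have hmem := Nat.sInf_mem hne
  rw [show sInf {n : ℕ | ∀ c : Sym2 (Fin n) → Fin q, ∃ i : Fin q, monoClique c i m} = 0 from h0] at hmem
  obtain ⟨i, A, hAc, _⟩ := hmem (fun _ => ⟨0, by omega⟩)
  have hA0 : A = ∅ := Finset.eq_empty_of_isEmpty A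
  rw [hA0, Finset.card_empty] at hAc
  omega


end OnlineRamseyHelpers

/-- If `r(k₁, …, k_q) ≤ f(k₁) q^{k₁ + ⋯ + k_q}` whenever `k₁ ≥ ⋯ ≥ k_q ≥ k₁/2`, then there
is a constant `c > 0` with `r̃_q(t) ≤ f(⌈ct⌉) q^{qt}` for all positive `t`. -/
theorem online_ramsey_q_from_ramsey_bound (q : ℕ) (hq : 2 ≤ q) (f : ℕ → ℝ)
    (hf0 : ∀ n, 0 ≤ f n)
    (hf : ∀ k : Fin q → ℕ, (∀ i, 0 < k i) → Antitone k →
      (∀ i, k ⟨0, by omega⟩ ≤ 2 * k i) →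
      (ramseyQ k : ℝ) ≤ f (k ⟨0, by omega⟩) * (q : ℝ) ^ (∑ i, k i)) :
    ∃ c : ℝ, 0 < c ∧ ∀ t : ℕ, 0 < t →
      (onlineRamsey q (⊤ : SimpleGraph (Fin t)) : ℝ) ≤
        f ⌈c * t⌉₊ * (q : ℝ) ^ (q * t) := by
  have hq2 : (2 : ℝ) ≤ q := by exact_mod_cast hq
  have hq0 : (0 : ℝ) < q := by linarith
  have hlq0 : 0 < Real.log q := Real.log_pos (by linarith)
  have hfm : ∀ m : ℕ, 1 ≤ m → 1 ≤ f m * (q : ℝ) ^ (q * m) := by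
    intro m hm
    have h1 := hf (fun _ => m) (fun _ => hm) (fun _ _ _ => le_rfl) (fun _ => by omega)
    simp only [Finset.sum_const, Finset.card_univ, Fintype.card_fin, smul_eq_mul] at h1
    refine le_trans ?_ h1
    exact_mod_cast ramseyQ_const_pos hq hm
  obtain ⟨δ, hδ, T0, hT⟩ := online_exp q hq
  set c := min (1 / ((T0 : ℝ) + 1)) (δ / 2) with hc
  have hc0 : 0 < c := lt_min (by positivity) (by positivity)
  refine ⟨c, hc0, fun t ht => ?_⟩
  have ht0 : (0 : ℝ) < t := by exact_mod_cast ht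
  have hm1 : 1 ≤ ⌈c * t⌉₊ := Nat.ceil_pos.2 (by positivity)
  have hF := hfm _ hm1
  have hFnn := hf0 ⌈c * t⌉₊
  rcases le_or_gt (c * t) 1 with h1 | h1
  · have hm : ⌈c * t⌉₊ = 1 := le_antisymm (Nat.ceil_le.2 (by simpa using h1)) hm1
    rw [hm] at hF ⊢
    have h2 : (onlineRamsey q (⊤ : SimpleGraph (Fin t)) : ℝ) ≤ (q : ℝ) ^ (q * (t - 1)) := by
      exact_mod_cast online_simple hq ht
    refine h2.trans ?_
    have e : q * t = q * 1 + q * (t - 1) := by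
      obtain ⟨r, rfl⟩ : ∃ r, t = r + 1 := ⟨t - 1, by omega⟩
      rw [Nat.add_sub_cancel]; ring
    rw [e, pow_add, ← mul_assoc]
    exact le_mul_of_one_le_left (by positivity) hF
  · have hT0t : T0 ≤ t := by
      have h2 : 1 < 1 / ((T0 : ℝ) + 1) * t :=
        lt_of_lt_of_le h1 (by gcongr; exact min_le_left _ _)
      have h3 : (T0 : ℝ) + 1 < t := by
        rw [one_div, inv_mul_eq_div, lt_div_iff₀ (by positivity)] at h2
        linarith
      have : (T0 : ℝ) ≤ t := by linarith
      exact_mod_cast this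
    refine (hT t hT0t).trans ?_
    set m := ⌈c * t⌉₊ with hm
    have hmle : (m : ℝ) ≤ δ * t := by
      have h2 := (Nat.ceil_lt_add_one (by positivity : 0 ≤ c * t)).le
      have h3 : c * t ≤ δ / 2 * t := by gcongr; exact min_le_right _ _
      rw [← hm] at h2
      linarith
    have epow : ∀ n : ℕ, (q : ℝ) ^ n = Real.exp (n * Real.log q) := by
      intro n
      rw [← Real.log_pow, Real.exp_log (by positivity)]
    rw [epow] at hF ⊢
    have e : Real.exp (((q * t : ℕ) : ℝ) * Real.log q) =
        Real.exp (((q * m : ℕ) : ℝ) * Real.log q) * Real.exp ((q * t - q * m) * Real.log q) := by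
      rw [← Real.exp_add]; congr 1; push_cast; ring
    rw [e]
    have h5 := le_mul_of_one_le_left (Real.exp_pos ((q * t - q * m) * Real.log q)).le hF
    rw [mul_assoc] at h5
    refine le_trans (Real.exp_le_exp.2 ?_) h5
    have h4 : q * Real.log q * m ≤ q * Real.log q * (δ * t) := by gcongr
    linarith
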